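/- arXiv:2303.16263 — 2 statements merged into one kernel-verified Lean document; each statement's English description precedes it below -/
import Mathlib

section
/- There exist two 16-point subsets W₁ and W₂ of ℙ³ such that every 16-point set Z = Z_a ∪ Z_b ∪ Z_c ∪ Z_d satisfying the half-grid hypotheses is projectively equivalent to W₁ or to W₂; that is, there is a linear automorphism of ℂ⁴ whose induced projective transformation maps W₁ onto Z or maps W₂ onto Z. In other words, up to projective equivalence there are at most two sets of 16 points distributed evenly on 4 skew lines satisfying the half-grid hypotheses. -/
open Projectivization
open scoped LinearAlgebra.Projectivization

/-- The half-grid hypotheses for a 16-point set `Z = Z 0 ∪ Z 1 ∪ Z 2 ∪ Z 3` distributed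
evenly on four pairwise skew lines `R 0, …, R 3` in `ℙ³` (lines are given by their
2-dimensional subspaces of `ℂ⁴`):
* each `Z x` consists of 4 distinct points of the line `ℙ(R x)`;
* no nonzero homogeneous quadratic form on `ℂ⁴` vanishes at all points of `Z`;
* for each `x`, the 12 points `Z ∖ Z x` form a (3,4)-grid with respect to the remaining
  three lines: there are four pairwise skew lines `ℓ 0, …, ℓ 3`, each meeting each line
  `ℙ(R y)` (`y ≠ x`) in exactly one point, the 12 intersection points being exactly
  `Z ∖ Z x`. -/
structure HalfGridHyp (R : Fin 4 → Submodule ℂ (Fin 4 → ℂ))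
    (Z : Fin 4 → Set (ℙ ℂ (Fin 4 → ℂ))) : Prop where
  finrank_eq : ∀ x, Module.finrank ℂ (R x) = 2
  skew : ∀ x y, x ≠ y → R x ⊓ R y = ⊥
  ncard_eq : ∀ x, (Z x).ncard = 4
  mem_line : ∀ x, ∀ p ∈ Z x, p.submodule ≤ R x
  no_quadric : ¬ ∃ q : QuadraticForm ℂ (Fin 4 → ℂ), q ≠ 0 ∧
    ∀ x, ∀ p ∈ Z x, ∀ v ∈ Projectivization.submodule p, q v = 0
  grid : ∀ x : Fin 4, ∃ ℓ : Fin 4 → Submodule ℂ (Fin 4 → ℂ),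
    (∀ i, Module.finrank ℂ (ℓ i) = 2) ∧
    (∀ i j, i ≠ j → ℓ i ⊓ ℓ j = ⊥) ∧
    (∀ i, ∀ y, y ≠ x → ∃! p : ℙ ℂ (Fin 4 → ℂ),
      p.submodule ≤ ℓ i ∧ p.submodule ≤ R y) ∧
    {p : ℙ ℂ (Fin 4 → ℂ) | ∃ i y, y ≠ x ∧ p.submodule ≤ ℓ i ∧ p.submodule ≤ R y}
      = (⋃ y, Z y) \ Z x

/-- cone over a set of points -/
def HGood (Z : Set (ℙ ℂ (Fin 4 → ℂ))) (v : Fin 4 → ℂ) : Prop :=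
  ∃ h : v ≠ 0, Projectivization.mk ℂ v h ∈ Z

theorem HGood.smul {Z : Set (ℙ ℂ (Fin 4 → ℂ))} {v : Fin 4 → ℂ} (h : HGood Z v) {c : ℂ}
    (hc : c ≠ 0) : HGood Z (c • v) := by
  obtain ⟨h0, h1⟩ := h
  refine ⟨smul_ne_zero hc h0, ?_⟩
  have : Projectivization.mk ℂ (c • v) (smul_ne_zero hc h0) = Projectivization.mk ℂ v h0 := by
    rw [Projectivization.mk_eq_mk_iff']
    exact ⟨c, rfl⟩
  rwa [this]

theorem HGood.rep {Z : Set (ℙ ℂ (Fin 4 → ℂ))} {p} (h : p ∈ Z) : HGood Z p.rep :=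
  ⟨p.rep_nonzero, by rwa [Projectivization.mk_rep]⟩

theorem sub_le_iff (p : ℙ ℂ (Fin 4 → ℂ)) (R : Submodule ℂ (Fin 4 → ℂ)) :
    p.submodule ≤ R ↔ p.rep ∈ R := by
  rw [Projectivization.submodule_eq, Submodule.span_singleton_le_iff_mem]

theorem skew_zero {V : Type*} [AddCommGroup V] [Module ℂ V] {P Q : Submodule ℂ V}
    (h : P ⊓ Q = ⊥) {v : V} (h1 : v ∈ P) (h2 : v ∈ Q) : v = 0 := by
  have : v ∈ P ⊓ Q := ⟨h1, h2⟩
  rwa [h, Submodule.mem_bot] at this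

section
variable {R : Fin 4 → Submodule ℂ (Fin 4 → ℂ)} {Z : Fin 4 → Set (ℙ ℂ (Fin 4 → ℂ))}

theorem HalfGridHyp.good_mem (H : HalfGridHyp R Z) {x v} (h : HGood (Z x) v) : v ∈ R x := by
  obtain ⟨h0, h1⟩ := h
  have := H.mem_line x _ h1
  rwa [Projectivization.submodule_mk, Submodule.span_singleton_le_iff_mem] at this

theorem HalfGridHyp.mem_of (H : HalfGridHyp R Z) {p y} (h : p ∈ ⋃ x, Z x) (hp : p.submodule ≤ R y) :
    p ∈ Z y := by
  obtain ⟨z, hz⟩ := Set.mem_iUnion.1 h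
  by_cases hzy : z = y
  · exact hzy ▸ hz
  · exact absurd (skew_zero (H.skew z y hzy) (H.good_mem (HGood.rep hz)) ((sub_le_iff _ _).1 hp))
      p.rep_nonzero

theorem HalfGridHyp.disj (H : HalfGridHyp R Z) {x y} (hxy : x ≠ y) {p} (hx : p ∈ Z x)
    (hy : p ∈ Z y) : False :=
  p.rep_nonzero (skew_zero (H.skew x y hxy) (H.good_mem (HGood.rep hx)) (H.good_mem (HGood.rep hy)))

theorem plane_dep {L : Submodule ℂ (Fin 4 → ℂ)} (hL : Module.finrank ℂ L = 2) {a b c : Fin 4 → ℂ}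
    (ha : a ∈ L) (hb : b ∈ L) (hc : c ∈ L) (hab : LinearIndependent ℂ ![a, b]) :
    ∃ s t : ℂ, s • a + t • b = c := by
  have h1 : Submodule.span ℂ (Set.range ![a, b]) = L := by
    apply Submodule.eq_of_le_of_finrank_eq
    · rw [Submodule.span_le]
      rintro _ ⟨i, rfl⟩
      fin_cases i
      · exact ha
      · exact hb
    · rw [finrank_span_eq_card hab, hL]; rfl
  rw [← h1] at hc
  obtain ⟨t, s, h⟩ : ∃ t s : ℂ, t • b + s • a = c := by
    simpa [Matrix.range_cons, Submodule.mem_span_pair] using hc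
  exact ⟨s, t, by rw [add_comm, h]⟩

theorem HalfGridHyp.collinear (H : HalfGridHyp R Z) {y z w : Fin 4} (hyz : y ≠ z) (hyw : y ≠ w)
    (hzw : z ≠ w) {a} (ha : HGood (Z y) a) :
    ∃ b, HGood (Z z) b ∧ HGood (Z w) (a + b) := by
  obtain ⟨x, hxy, hxz, hxw⟩ : ∃ x : Fin 4, y ≠ x ∧ z ≠ x ∧ w ≠ x :=
    (by decide : ∀ y z w : Fin 4, ∃ x : Fin 4, y ≠ x ∧ z ≠ x ∧ w ≠ x) y z w
  obtain ⟨l, hl2, -, hl3, hl4⟩ := H.grid x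
  have haR := H.good_mem ha
  obtain ⟨a0, ha1⟩ := ha
  have hp : Projectivization.mk ℂ a a0 ∈ (⋃ y, Z y) \ Z x :=
    ⟨Set.mem_iUnion.2 ⟨y, ha1⟩, fun h => H.disj hxy ha1 h⟩
  rw [← hl4] at hp
  obtain ⟨i, y', hy', hi1, hi2⟩ := hp
  rw [Projectivization.submodule_mk, Submodule.span_singleton_le_iff_mem] at hi1
  have key : ∀ u, u ≠ x → ∃ b, b ∈ l i ∧ HGood (Z u) b := by
    intro u hu
    obtain ⟨q, ⟨hq1, hq2⟩, -⟩ := hl3 i u hu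
    have : q ∈ (⋃ y, Z y) \ Z x := by
      rw [← hl4]; exact ⟨i, u, hu, hq1, hq2⟩
    exact ⟨q.rep, (sub_le_iff _ _).1 hq1, HGood.rep (H.mem_of this.1 hq2)⟩
  obtain ⟨b, hb1, hb2⟩ := key z hxz
  obtain ⟨c, hc1, hc2⟩ := key w hxw
  have hbR := H.good_mem hb2
  have hcR := H.good_mem hc2
  have hli : LinearIndependent ℂ ![a, b] := by
    rw [LinearIndependent.pair_iff]
    intro s t hst
    have h1 : s • a = 0 := by
      apply skew_zero (H.skew y z hyz) ((R y).smul_mem s haR)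
      rw [eq_neg_of_add_eq_zero_left hst]
      exact (R z).neg_mem ((R z).smul_mem t hbR)
    have hs : s = 0 := (smul_eq_zero.1 h1).resolve_right a0
    subst hs
    simp only [zero_smul, zero_add] at hst
    exact ⟨rfl, (smul_eq_zero.1 hst).resolve_right hb2.1⟩
  obtain ⟨s, t, hst⟩ := plane_dep (hl2 i) hi1 hb1 hc1 hli
  have hs : s ≠ 0 := by
    rintro rfl
    simp only [zero_smul, zero_add] at hst
    exact hc2.1 (skew_zero (H.skew z w hzw) (hst ▸ (R z).smul_mem t hbR) hcR)
  have ht : t ≠ 0 := by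
    rintro rfl
    simp only [zero_smul, add_zero] at hst
    exact hc2.1 (skew_zero (H.skew y w hyw) (hst ▸ (R y).smul_mem s haR) hcR)
  refine ⟨(s⁻¹ * t) • b, hb2.smul (mul_ne_zero (inv_ne_zero hs) ht), ?_⟩
  have := hc2.smul (inv_ne_zero hs)
  rwa [← hst, smul_add, smul_smul, smul_smul, inv_mul_cancel₀ hs, one_smul] at this

theorem HalfGridHyp.ncard16 (H : HalfGridHyp R Z) : (⋃ x, Z x).ncard = 16 := by
  rw [Set.ncard_iUnion_of_finite]
  · rw [finsum_eq_sum_of_fintype]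
    simp [H.ncard_eq]
  · intro i
    apply Set.finite_of_ncard_ne_zero
    rw [H.ncard_eq]; norm_num
  · intro i j hij
    rw [Function.onFun, Set.disjoint_left]
    intro p h1 h2
    exact H.disj hij h1 h2

theorem graph_map {P0 P1 P : Submodule ℂ (Fin 4 → ℂ)} (h0 : Module.finrank ℂ P0 = 2)
    (h1 : Module.finrank ℂ P1 = 2) (h : Module.finrank ℂ P = 2) (h01 : P0 ⊓ P1 = ⊥)
    (hP0 : P0 ⊓ P = ⊥) (hP1 : P1 ⊓ P = ⊥) :
    ∃ g : P0 →ₗ[ℂ] P1, Function.Injective g ∧ ∀ x : P0, (x : Fin 4 → ℂ) + g x ∈ P := by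
  have hc : IsCompl P0 P1 := by
    rw [Submodule.isCompl_iff_disjoint]
    · exact disjoint_iff.2 h01
    · simp [h0, h1]
  let e := Submodule.prodEquivOfIsCompl P0 P1 hc
  have he : ∀ v, ((e.symm v).1 : Fin 4 → ℂ) + (e.symm v).2 = v := fun v => by
    conv_rhs => rw [← e.apply_symm_apply v]
    rfl
  let f : P →ₗ[ℂ] P0 := (LinearMap.fst ℂ P0 P1).comp (e.symm.toLinearMap.comp P.subtype)
  have hf : Function.Injective f := by
    rw [← LinearMap.ker_eq_bot, LinearMap.ker_eq_bot']
    intro m hm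
    have hm' : (e.symm m).1 = 0 := hm
    have := he m
    rw [hm'] at this
    simp only [ZeroMemClass.coe_zero, zero_add] at this
    apply Subtype.ext
    exact skew_zero hP1 (this ▸ (e.symm m).2.2) m.2
  let F := LinearMap.linearEquivOfInjective f hf (h.trans h0.symm)
  have hF : ∀ x, (e.symm (F.symm x : Fin 4 → ℂ)).1 = x := fun x => F.apply_symm_apply x
  let g : P0 →ₗ[ℂ] P1 := (LinearMap.snd ℂ P0 P1).comp
    (e.symm.toLinearMap.comp (P.subtype.comp F.symm.toLinearMap))
  have hg : ∀ x : P0, (x : Fin 4 → ℂ) + g x ∈ P := by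
    intro x
    have := he (F.symm x : Fin 4 → ℂ)
    rw [hF] at this
    have h2 : (x : Fin 4 → ℂ) + g x = F.symm x := this
    rw [h2]
    exact (F.symm x).2
  refine ⟨g, ?_, hg⟩
  rw [← LinearMap.ker_eq_bot, LinearMap.ker_eq_bot']
  intro m hm
  have := hg m
  rw [hm] at this
  simp only [ZeroMemClass.coe_zero, add_zero] at this
  apply Subtype.ext
  exact skew_zero hP0 m.2 this

theorem HalfGridHyp.coords (H : HalfGridHyp R Z) :
    ∃ (Φ : ((ℂ × ℂ) × (ℂ × ℂ)) ≃ₗ[ℂ] (Fin 4 → ℂ)) (A : (ℂ × ℂ) →ₗ[ℂ] (ℂ × ℂ)),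
      (∀ x y, Φ (x, y) ∈ R 0 ↔ y = 0) ∧ (∀ x y, Φ (x, y) ∈ R 1 ↔ x = 0) ∧
      (∀ x y, Φ (x, y) ∈ R 2 ↔ y = x) ∧ (∀ x y, Φ (x, y) ∈ R 3 ↔ y = A x) := by
  obtain ⟨g, hgi, hg⟩ := graph_map (H.finrank_eq 0) (H.finrank_eq 1) (H.finrank_eq 2)
    (H.skew 0 1 (by decide)) (H.skew 0 2 (by decide)) (H.skew 1 2 (by decide))
  obtain ⟨k, -, hk⟩ := graph_map (H.finrank_eq 0) (H.finrank_eq 1) (H.finrank_eq 3)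
    (H.skew 0 1 (by decide)) (H.skew 0 3 (by decide)) (H.skew 1 3 (by decide))
  let G := LinearMap.linearEquivOfInjective g hgi ((H.finrank_eq 0).trans (H.finrank_eq 1).symm)
  have hG : ∀ x, G x = g x := fun x => rfl
  let I : (ℂ × ℂ) ≃ₗ[ℂ] R 0 := LinearEquiv.ofFinrankEq _ _ (by rw [H.finrank_eq 0]; simp)
  have hc : IsCompl (R 0) (R 1) := by
    rw [Submodule.isCompl_iff_disjoint]
    · exact disjoint_iff.2 (H.skew 0 1 (by decide))
    · simp [H.finrank_eq]
  let Φ := (I.prodCongr (I.trans G)).trans (Submodule.prodEquivOfIsCompl _ _ hc)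
  have hΦ : ∀ x y, Φ (x, y) = (I x : Fin 4 → ℂ) + g (I y) := fun x y => rfl
  let A : (ℂ × ℂ) →ₗ[ℂ] (ℂ × ℂ) := I.symm.toLinearMap.comp
    (G.symm.toLinearMap.comp (k.comp I.toLinearMap))
  have hA : ∀ x, g (I (A x)) = k (I x) := by
    intro x
    rw [← hG]
    simp [A]
  have z1 : ∀ y y', ((g (I y) : R 1) : Fin 4 → ℂ) - g (I y') = 0 → y = y' := by
    intro y y' h
    exact I.injective (hgi (Subtype.ext (sub_eq_zero.1 h)))
  refine ⟨Φ, A, ?_, ?_, ?_, ?_⟩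
  · intro x y
    constructor
    · intro h
      rw [hΦ, Submodule.add_mem_iff_right _ (I x).2] at h
      apply z1 y 0
      simpa using skew_zero (H.skew 0 1 (by decide)) h (g (I y)).2
    · rintro rfl
      simp [hΦ]
  · intro x y
    constructor
    · intro h
      rw [hΦ, Submodule.add_mem_iff_left _ (g (I y)).2] at h
      apply I.injective
      rw [map_zero]
      exact Subtype.ext (skew_zero (H.skew 0 1 (by decide)) (I x).2 h)
    · rintro rfl
      simp [hΦ]
  · intro x y
    constructor
    · intro h
      have h2 := (R 2).sub_mem h (hg (I x))
      rw [hΦ, add_sub_add_left_eq_sub] at h2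
      exact z1 _ _ (skew_zero (H.skew 1 2 (by decide)) ((R 1).sub_mem (g (I y)).2 (g (I x)).2) h2)
    · rintro rfl
      exact hg _
  · intro x y
    constructor
    · intro h
      have h2 := (R 3).sub_mem h (hk (I x))
      rw [hΦ, add_sub_add_left_eq_sub, ← hA] at h2
      exact z1 _ _ (skew_zero (H.skew 1 3 (by decide))
        ((R 1).sub_mem (g (I y)).2 (g (I (A x))).2) h2)
    · rintro rfl
      rw [hΦ, hA]
      exact hk _

end
/-- affine parametrisation of the projective line -/
def hphi : Option ℂ → ℂ × ℂ
  | none => (0, 1)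
  | some z => (1, z)

theorem hphi_ne (o) : hphi o ≠ 0 := by
  cases o <;> simp [hphi]

theorem hphi_inj {o o' : Option ℂ} {c : ℂ} (h : c • hphi o' = hphi o) : o = o' := by
  rcases o with _ | z <;> rcases o' with _ | z' <;> simp [hphi] at h ⊢
  · rcases h with ⟨rfl, h⟩
    simp at h
  · rcases h with ⟨rfl, h⟩
    simpa using h.symm

theorem hphi_surj {u : ℂ × ℂ} (hu : u ≠ 0) : ∃ o, ∃ c : ℂ, c ≠ 0 ∧ u = c • hphi o := by
  obtain ⟨a, b⟩ := u
  by_cases ha : a = 0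
  · subst ha
    refine ⟨none, b, ?_, ?_⟩
    · rintro rfl
      exact hu rfl
    · simp [hphi]
  · refine ⟨some (b / a), a, ha, ?_⟩
    simp [hphi]
    field_simp

/-- the algebraic data extracted from a half grid -/
structure HCfg (U : Set (ℙ ℂ (Fin 4 → ℂ))) (Φ : ((ℂ × ℂ) × (ℂ × ℂ)) ≃ₗ[ℂ] (Fin 4 → ℂ))
    (A : (ℂ × ℂ) →ₗ[ℂ] (ℂ × ℂ)) (S : ℂ × ℂ → Prop) : Prop where
  mem : ∀ x y, HGood U (Φ (x, y)) ↔
    (y = 0 ∧ S x) ∨ (x = 0 ∧ S y) ∨ (y = x ∧ S x) ∨ (y = A x ∧ S x)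
  ne : ∀ u, S u → u ≠ 0
  smul : ∀ u (c : ℂ), c ≠ 0 → S u → S (c • u)
  mapA : ∀ u, S u → S (A u)
  mapB : ∀ u, S u → S (u - A u)
  injA : ∀ u, A u = 0 → u = 0
  injB : ∀ u, A u = u → u = 0
  nonscalar : ¬ ∃ c : ℂ, ∀ u, A u = c • u
  card : ∀ P : (ℂ × ℂ) ≃ₗ[ℂ] (ℂ × ℂ), {o : Option ℂ | S (P (hphi o))}.ncard = 4

theorem HalfGridHyp.cfg {R : Fin 4 → Submodule ℂ (Fin 4 → ℂ)} {Z : Fin 4 → Set (ℙ ℂ (Fin 4 → ℂ))}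
    (H : HalfGridHyp R Z) : ∃ Φ A S, HCfg (⋃ x, Z x) Φ A S := by
  obtain ⟨Φ, A, r0, r1, r2, r3⟩ := H.coords
  have ex : ∀ v, ∃ x y, v = Φ (x, y) := fun v =>
    ⟨(Φ.symm v).1, (Φ.symm v).2, by simp⟩
  have add : ∀ x y x' y', Φ (x, y) + Φ (x', y') = Φ (x + x', y + y') := fun x y x' y' => by
    rw [← map_add]; rfl
  have smul : ∀ (c : ℂ) x y, c • Φ (x, y) = Φ (c • x, c • y) := fun c x y => by
    rw [← map_smul]; rfl
  have a01 : ∀ u, HGood (Z 0) (Φ (u, 0)) → HGood (Z 1) (Φ (0, u)) ∧ HGood (Z 2) (Φ (u, u)) := by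
    intro u hu
    obtain ⟨b, hb, hc⟩ := H.collinear (y := 0) (z := 1) (w := 2) (by decide) (by decide) (by decide) hu
    obtain ⟨x, y, rfl⟩ := ex b
    obtain rfl := (r1 _ _).1 (H.good_mem hb)
    rw [add] at hc
    have := (r2 _ _).1 (H.good_mem hc)
    simp only [zero_add, add_zero] at this hc
    subst this
    exact ⟨hb, hc⟩
  have a10 : ∀ u, HGood (Z 1) (Φ (0, u)) → HGood (Z 0) (Φ (u, 0)) := by
    intro u hu
    obtain ⟨b, hb, hc⟩ := H.collinear (y := 1) (z := 0) (w := 2) (by decide) (by decide) (by decide) hu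
    obtain ⟨x, y, rfl⟩ := ex b
    obtain rfl := (r0 _ _).1 (H.good_mem hb)
    rw [add] at hc
    have := (r2 _ _).1 (H.good_mem hc)
    simp only [zero_add, add_zero] at this hc
    subst this
    exact hb
  have a20 : ∀ u, HGood (Z 2) (Φ (u, u)) → HGood (Z 0) (Φ (u, 0)) := by
    intro u hu
    obtain ⟨b, hb, hc⟩ := H.collinear (y := 2) (z := 1) (w := 0) (by decide) (by decide) (by decide) hu
    obtain ⟨x, y, rfl⟩ := ex b
    obtain rfl := (r1 _ _).1 (H.good_mem hb)
    rw [add] at hc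
    have := (r0 _ _).1 (H.good_mem hc)
    rwa [this, add_zero] at hc
  have a03 : ∀ u, HGood (Z 0) (Φ (u, 0)) → HGood (Z 3) (Φ (u, A u)) ∧ HGood (Z 1) (Φ (0, A u)) := by
    intro u hu
    obtain ⟨b, hb, hc⟩ := H.collinear (y := 0) (z := 1) (w := 3) (by decide) (by decide) (by decide) hu
    obtain ⟨x, y, rfl⟩ := ex b
    obtain rfl := (r1 _ _).1 (H.good_mem hb)
    rw [add] at hc
    have := (r3 _ _).1 (H.good_mem hc)
    simp only [zero_add, add_zero] at this hc
    subst this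
    exact ⟨hc, hb⟩
  have a30 : ∀ u, HGood (Z 3) (Φ (u, A u)) → HGood (Z 0) (Φ (u, 0)) := by
    intro u hu
    obtain ⟨b, hb, hc⟩ := H.collinear (y := 3) (z := 1) (w := 0) (by decide) (by decide) (by decide) hu
    obtain ⟨x, y, rfl⟩ := ex b
    obtain rfl := (r1 _ _).1 (H.good_mem hb)
    rw [add] at hc
    have := (r0 _ _).1 (H.good_mem hc)
    rwa [this, add_zero] at hc
  have a3B : ∀ u, HGood (Z 3) (Φ (u, A u)) → HGood (Z 0) (Φ (u - A u, 0)) := by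
    intro u hu
    obtain ⟨b, hb, hc⟩ := H.collinear (y := 3) (z := 2) (w := 0) (by decide) (by decide) (by decide) hu
    obtain ⟨x, y, rfl⟩ := ex b
    obtain rfl := (r2 _ _).1 (H.good_mem hb)
    rw [add] at hc
    have := (r0 _ _).1 (H.good_mem hc)
    rw [this] at hc
    rw [eq_neg_of_add_eq_zero_right this, ← sub_eq_add_neg] at hc
    exact hc
  have sm : ∀ u (c : ℂ), c ≠ 0 → HGood (Z 0) (Φ (u, 0)) → HGood (Z 0) (Φ (c • u, 0)) := by
    intro u c hc h
    have := h.smul hc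
    rwa [smul, smul_zero] at this
  refine ⟨Φ, A, fun u => HGood (Z 0) (Φ (u, 0)), ?_, ?_, sm, ?_, ?_, ?_, ?_, ?_, ?_⟩
  · intro x y
    constructor
    · rintro ⟨h0, h1⟩
      obtain ⟨i, hi⟩ := Set.mem_iUnion.1 h1
      have hi : HGood (Z i) (Φ (x, y)) := ⟨h0, hi⟩
      have hi' := H.good_mem hi
      fin_cases i
      · left
        obtain rfl := (r0 _ _).1 hi'
        exact ⟨rfl, hi⟩
      · right; left
        obtain rfl := (r1 _ _).1 hi'
        exact ⟨rfl, a10 _ hi⟩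
      · right; right; left
        obtain rfl := (r2 _ _).1 hi'
        exact ⟨rfl, a20 _ hi⟩
      · right; right; right
        obtain rfl := (r3 _ _).1 hi'
        exact ⟨rfl, a30 _ hi⟩
    · have up : ∀ i v, HGood (Z i) v → HGood (⋃ x, Z x) v := fun i v h =>
        ⟨h.1, Set.mem_iUnion.2 ⟨i, h.2⟩⟩
      rintro (⟨rfl, h⟩ | ⟨rfl, h⟩ | ⟨rfl, h⟩ | ⟨rfl, h⟩)
      · exact up _ _ h
      · exact up _ _ (a01 _ h).1
      · exact up _ _ (a01 _ h).2
      · exact up _ _ (a03 _ h).1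
  · rintro _ h rfl
    exact h.1 (map_zero Φ)
  · intro u hu
    exact a10 _ (a03 _ hu).2
  · intro u hu
    exact a3B _ (a03 _ hu).1
  · intro u hu
    have h3 := (r3 u 0).2 hu.symm
    have h0 := (r0 u 0).2 rfl
    have := skew_zero (H.skew 0 3 (by decide)) h0 h3
    rw [LinearEquiv.map_eq_zero_iff] at this
    exact congrArg Prod.fst this
  · intro u hu
    have h3 := (r3 u u).2 hu.symm
    have h0 := (r2 u u).2 rfl
    have := skew_zero (H.skew 2 3 (by decide)) h0 h3
    rw [LinearEquiv.map_eq_zero_iff] at this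
    exact congrArg Prod.fst this
  · rintro ⟨c, hc⟩
    apply H.no_quadric
    let x1 : (Fin 4 → ℂ) →ₗ[ℂ] ℂ := (LinearMap.fst ℂ ℂ ℂ).comp
      ((LinearMap.fst ℂ (ℂ × ℂ) (ℂ × ℂ)).comp Φ.symm.toLinearMap)
    let x2 : (Fin 4 → ℂ) →ₗ[ℂ] ℂ := (LinearMap.snd ℂ ℂ ℂ).comp
      ((LinearMap.fst ℂ (ℂ × ℂ) (ℂ × ℂ)).comp Φ.symm.toLinearMap)
    let y1 : (Fin 4 → ℂ) →ₗ[ℂ] ℂ := (LinearMap.fst ℂ ℂ ℂ).comp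
      ((LinearMap.snd ℂ (ℂ × ℂ) (ℂ × ℂ)).comp Φ.symm.toLinearMap)
    let y2 : (Fin 4 → ℂ) →ₗ[ℂ] ℂ := (LinearMap.snd ℂ ℂ ℂ).comp
      ((LinearMap.snd ℂ (ℂ × ℂ) (ℂ × ℂ)).comp Φ.symm.toLinearMap)
    let q : QuadraticForm ℂ (Fin 4 → ℂ) :=
      QuadraticMap.linMulLin x1 y2 - QuadraticMap.linMulLin x2 y1
    have hq : ∀ x y, q (Φ (x, y)) = x.1 * y.2 - x.2 * y.1 := by
      intro x y
      simp [q, x1, x2, y1, y2]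
    refine ⟨q, ?_, ?_⟩
    · intro h
      have h1 := hq (1, 0) (0, 1)
      rw [h] at h1
      simp at h1
    · intro i p hp v hv
      have hv' : v ∈ R i := H.mem_line i p hp hv
      obtain ⟨x, y, rfl⟩ := ex v
      rw [hq]
      fin_cases i
      · obtain rfl := (r0 _ _).1 hv'
        simp
      · obtain rfl := (r1 _ _).1 hv'
        simp
      · obtain rfl := (r2 _ _).1 hv'
        ring
      · obtain rfl := (r3 _ _).1 hv'
        rw [hc]
        simp
        ring
  · intro P
    have hne : ∀ o, Φ (P (hphi o), 0) ≠ 0 := by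
      intro o h
      rw [LinearEquiv.map_eq_zero_iff] at h
      have := congrArg Prod.fst h
      simp only [Prod.fst_zero, LinearEquiv.map_eq_zero_iff] at this
      exact hphi_ne o this
    refine Eq.trans ?_ (H.ncard_eq 0)
    refine Set.ncard_congr (fun o _ => Projectivization.mk ℂ (Φ (P (hphi o), 0)) (hne o)) ?_ ?_ ?_
    · intro o ho
      exact ho.2
    · intro o o' _ _ h
      rw [Projectivization.mk_eq_mk_iff'] at h
      obtain ⟨c, hc⟩ := h
      rw [smul] at hc
      have := congrArg Prod.fst (Φ.injective hc)
      simp only [← map_smul] at this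
      exact hphi_inj (P.injective this)
    · intro p hp
      have hg := HGood.rep hp
      obtain ⟨x, y, hxy⟩ := ex p.rep
      rw [hxy] at hg
      obtain rfl := (r0 _ _).1 (H.good_mem hg)
      have hx : P.symm x ≠ 0 := by
        intro h
        rw [LinearEquiv.map_eq_zero_iff] at h
        subst h
        exact hg.1 (map_zero Φ)
      obtain ⟨o, c, hc, hu⟩ := hphi_surj hx
      have hx' : x = c • P (hphi o) := by
        rw [← map_smul, ← hu]; simp
      refine ⟨o, ?_, ?_⟩
      · have := sm x c⁻¹ (inv_ne_zero hc) hg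
        rw [hx', smul_smul, inv_mul_cancel₀ hc, one_smul] at this
        exact this
      · rw [← Projectivization.mk_rep p, Projectivization.mk_eq_mk_iff']
        refine ⟨c⁻¹, ?_⟩
        rw [hxy, smul, hx', smul_smul, inv_mul_cancel₀ hc, one_smul, smul_zero]
/-- a lower triangular automorphism -/
noncomputable def hsh (k c : ℂ) (hc : c ≠ 0) : (ℂ × ℂ) ≃ₗ[ℂ] (ℂ × ℂ) where
  toFun u := (u.1, c * u.2 + k * u.1)
  invFun u := (u.1, c⁻¹ * (u.2 - k * u.1))
  map_add' u v := by ext <;> simp; ring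
  map_smul' r u := by ext <;> simp; ring
  left_inv u := by ext <;> simp [hc]
  right_inv u := by ext <;> simp [hc]

theorem htri (A : (ℂ × ℂ) →ₗ[ℂ] (ℂ × ℂ)) : ∃ (P : (ℂ × ℂ) ≃ₗ[ℂ] (ℂ × ℂ)) (l m n : ℂ),
    ∀ a b, A (P (a, b)) = P (l * a, n * a + m * b) := by
  obtain ⟨m, hm⟩ := Module.End.exists_eigenvalue (V := ℂ × ℂ) (K := ℂ) A
  obtain ⟨v, hv⟩ := hm.exists_hasEigenvector
  have hv0 := hv.2
  have hvA : A v = m • v := hv.apply_eq_smul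
  obtain ⟨w, hw⟩ : ∃ w : ℂ × ℂ, ∀ a b : ℂ, a • w + b • v = 0 → a = 0 ∧ b = 0 := by
    obtain ⟨v1, v2⟩ := v
    by_cases h : v2 = 0
    · subst h
      have h1 : v1 ≠ 0 := by
        rintro rfl; exact hv0 rfl
      refine ⟨(0, 1), fun a b hab => ?_⟩
      simpa [h1, and_comm] using hab
    · refine ⟨(1, 0), fun a b hab => ?_⟩
      simp [h] at hab
      obtain ⟨h1, rfl⟩ := hab
      simpa using h1
  let p : (ℂ × ℂ) →ₗ[ℂ] (ℂ × ℂ) :=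
    LinearMap.coprod (LinearMap.toSpanSingleton ℂ _ w) (LinearMap.toSpanSingleton ℂ _ v)
  have hp : ∀ a b, p (a, b) = a • w + b • v := fun a b => by simp [p]
  have hpi : Function.Injective p := by
    rw [← LinearMap.ker_eq_bot, LinearMap.ker_eq_bot']
    rintro ⟨a, b⟩ h
    rw [hp] at h
    obtain ⟨rfl, rfl⟩ := hw a b h
    rfl
  let P := LinearEquiv.ofInjectiveEndo p hpi
  have hP : ∀ a b, P (a, b) = a • w + b • v := hp
  obtain ⟨l, n, hln⟩ : ∃ l n, A w = P (l, n) := ⟨(P.symm (A w)).1, (P.symm (A w)).2, by simp⟩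
  refine ⟨P, l, m, n, fun a b => ?_⟩
  rw [hP, map_add, map_smul, map_smul, hvA, hln, hP, hP]
  module

theorem hfin_smul {T : Finset ℂ} {r : ℂ} (hr : r ≠ 0) (h0 : (0 : ℂ) ∉ T)
    (h : ∀ z ∈ T, r * z ∈ T) : r ^ T.card = 1 := by
  have inj : Function.Injective (fun z : ℂ => r * z) := mul_right_injective₀ hr
  have himg : T.image (fun z => r * z) = T := by
    apply Finset.eq_of_subset_of_card_le
    · intro z hz
      obtain ⟨w, hw, rfl⟩ := Finset.mem_image.1 hz
      exact h w hw
    · rw [Finset.card_image_of_injective _ inj]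
  have h1 : ∏ z ∈ T, z = ∏ z ∈ T, (r * z) := by
    conv_lhs => rw [← himg]
    rw [Finset.prod_image (fun a _ b _ hab => inj hab)]
  rw [Finset.prod_mul_distrib, Finset.prod_const] at h1
  have h2 : ∏ z ∈ T, z ≠ 0 := by
    rw [Finset.prod_ne_zero_iff]
    rintro z hz rfl
    exact h0 hz
  field_simp at h1
  exact h1.symm

theorem hfin_add {T : Finset ℂ} {r : ℂ} (hT : T.card ≠ 0)
    (h : ∀ z ∈ T, z + r ∈ T) : r = 0 := by
  have inj : Function.Injective (fun z : ℂ => z + r) := add_left_injective r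
  have himg : T.image (fun z => z + r) = T := by
    apply Finset.eq_of_subset_of_card_le
    · intro z hz
      obtain ⟨w, hw, rfl⟩ := Finset.mem_image.1 hz
      exact h w hw
    · rw [Finset.card_image_of_injective _ inj]
  have h1 : ∑ z ∈ T, z = ∑ z ∈ T, (z + r) := by
    conv_lhs => rw [← himg]
    rw [Finset.sum_image (fun a _ b _ hab => inj hab)]
  rw [Finset.sum_add_distrib, Finset.sum_const, left_eq_add, nsmul_eq_mul] at h1
  exact (mul_eq_zero.1 h1).resolve_left (by exact_mod_cast hT)

theorem hroots3 {T : Finset ℂ} {r s c : ℂ} (hT : T.card = 3) (hc : c ≠ 0) (h0 : (0 : ℂ) ∉ T)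
    (r1 : r ≠ 1) (s1 : s ≠ 1) (rs : r ≠ s) (r0 : r ≠ 0) (s0 : s ≠ 0)
    (cT : c ∈ T) (hr : ∀ z ∈ T, r * z ∈ T) (hs : ∀ z ∈ T, s * z ∈ T) (z : ℂ) :
    z ∈ T ↔ z ^ 3 = c ^ 3 := by
  have hr3 := hfin_smul r0 h0 hr
  have hs3 := hfin_smul s0 h0 hs
  rw [hT] at hr3 hs3
  have er : r ^ 2 + r + 1 = 0 := by
    apply mul_left_cancel₀ (sub_ne_zero.2 r1); linear_combination hr3
  have es : s ^ 2 + s + 1 = 0 := by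
    apply mul_left_cancel₀ (sub_ne_zero.2 s1); linear_combination hs3
  have e : r + s + 1 = 0 := by
    apply mul_left_cancel₀ (sub_ne_zero.2 rs); linear_combination er - es
  have hTeq : ({c, r * c, s * c} : Finset ℂ) = T := by
    apply Finset.eq_of_subset_of_card_le
    · intro w hw
      simp only [Finset.mem_insert, Finset.mem_singleton] at hw
      rcases hw with rfl | rfl | rfl
      · exact cT
      · exact hr _ cT
      · exact hs _ cT
    · rw [hT, Finset.card_eq_three.2 ⟨c, r * c, s * c, ?_, ?_, ?_, rfl⟩]
      · intro h; apply r1; apply mul_right_cancel₀ hc; rw [← h, one_mul]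
      · intro h; apply s1; apply mul_right_cancel₀ hc; rw [← h, one_mul]
      · intro h; exact rs (mul_right_cancel₀ hc h)
  rw [← hTeq]
  simp only [Finset.mem_insert, Finset.mem_singleton]
  constructor
  · rintro (rfl | rfl | rfl)
    · rfl
    · linear_combination c ^ 3 * hr3
    · linear_combination c ^ 3 * hs3
  · intro h
    have hse : s = -1 - r := by linear_combination e
    have : (z - c) * ((z - r * c) * (z - s * c)) = 0 := by
      subst hse
      linear_combination h + (c ^ 3 - z * c ^ 2) * er
    rcases mul_eq_zero.1 this with h | h
    · left; exact sub_eq_zero.1 h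
    · rcases mul_eq_zero.1 h with h | h
      · right; left; exact sub_eq_zero.1 h
      · right; right; exact sub_eq_zero.1 h

theorem hroots4 {T : Finset ℂ} {r c : ℂ} (hT : T.card = 4) (hc : c ≠ 0)
    (r2 : r ^ 2 = -1) (cT : c ∈ T) (hr : ∀ z ∈ T, r * z ∈ T) (z : ℂ) :
    z ∈ T ↔ z ^ 4 = c ^ 4 := by
  have neg : ∀ z ∈ T, -z ∈ T := by
    intro z hz
    have := hr _ (hr _ hz)
    rwa [← mul_assoc, ← sq, r2, neg_one_mul] at this
  have hTeq : ({c, -c, r * c, -(r * c)} : Finset ℂ) = T := by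
    apply Finset.eq_of_subset_of_card_le
    · intro w hw
      simp only [Finset.mem_insert, Finset.mem_singleton] at hw
      rcases hw with rfl | rfl | rfl | rfl
      · exact cT
      · exact neg _ cT
      · exact hr _ cT
      · exact neg _ (hr _ cT)
    · have r1 : r ≠ 1 := by rintro rfl; norm_num at r2
      have r1' : r ≠ -1 := by rintro rfl; norm_num at r2
      have r0 : r ≠ 0 := by rintro rfl; norm_num at r2
      have k1 : c ≠ r * c := by
        intro h; apply r1; apply mul_right_cancel₀ hc; rw [← h, one_mul]
      have k2 : -c ≠ r * c := by
        intro h; apply r1'; apply mul_right_cancel₀ hc; rw [← h]; ring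
      have k3 : c ≠ -(r * c) := fun h => k2 (by rw [h, neg_neg, ← h])
      have k5 : c ≠ -c := fun h => hc (self_eq_neg.1 h)
      have k6 : r * c ≠ -(r * c) := fun h => mul_ne_zero r0 hc (self_eq_neg.1 h)
      have k7 : -c ≠ -(r * c) := fun h => k1 (neg_injective h)
      rw [hT, Finset.card_insert_of_notMem, Finset.card_insert_of_notMem,
        Finset.card_insert_of_notMem, Finset.card_singleton]
      · simpa using k6
      · simp only [Finset.mem_insert, Finset.mem_singleton, not_or]; exact ⟨k2, k7⟩
      · simp only [Finset.mem_insert, Finset.mem_singleton, not_or]; exact ⟨k5, k1, k3⟩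
  rw [← hTeq]
  simp only [Finset.mem_insert, Finset.mem_singleton]
  constructor
  · rintro (rfl | rfl | rfl | rfl)
    · rfl
    · ring
    · linear_combination c ^ 4 * (r ^ 2 - 1) * r2
    · linear_combination c ^ 4 * (r ^ 2 - 1) * r2
  · intro h
    have : ((z - c) * (z + c)) * ((z - r * c) * (z + r * c)) = 0 := by
      linear_combination h - c ^ 2 * (z ^ 2 - c ^ 2) * r2
    rcases mul_eq_zero.1 this with h | h <;> rcases mul_eq_zero.1 h with h | h
    · left; exact sub_eq_zero.1 h
    · right; left; exact eq_neg_of_add_eq_zero_left h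
    · right; right; left; exact sub_eq_zero.1 h
    · right; right; right; exact eq_neg_of_add_eq_zero_left h

theorem hroot_cases {r : ℂ} (h : r ^ 4 = 1) (r1 : r ≠ 1) : r = -1 ∨ r ^ 2 = -1 := by
  have : (r + 1) * (r ^ 2 + 1) = 0 := by
    apply mul_left_cancel₀ (sub_ne_zero.2 r1); linear_combination h
  rcases mul_eq_zero.1 this with h | h
  · left; exact eq_neg_of_add_eq_zero_left h
  · right; exact eq_neg_of_add_eq_zero_left h

theorem hcomb {Q : Set (Option ℂ)} (hQ : Q.ncard = 4) {r s : ℂ}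
    (r1 : r ≠ 1) (s1 : s ≠ 1) (rs : r ≠ s) (r0 : r ≠ 0) (s0 : s ≠ 0)
    (hr : ∀ z, some z ∈ Q → some (r * z) ∈ Q) (hs : ∀ z, some z ∈ Q → some (s * z) ∈ Q) :
    ∃ c : ℂ, c ≠ 0 ∧
      ((r ^ 4 = 1 ∧ s ^ 4 = 1 ∧ none ∉ Q ∧ ∀ z, some z ∈ Q ↔ z ^ 4 = c ^ 4) ∨
       (r ^ 3 = 1 ∧ s ^ 3 = 1 ∧ none ∉ Q ∧ ∀ z, some z ∈ Q ↔ (z = 0 ∨ z ^ 3 = c ^ 3)) ∨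
       (r ^ 3 = 1 ∧ s ^ 3 = 1 ∧ none ∈ Q ∧ ∀ z, some z ∈ Q ↔ z ^ 3 = c ^ 3)) := by
  classical
  have hfin : Q.Finite := Set.finite_of_ncard_ne_zero (by rw [hQ]; norm_num)
  obtain ⟨q, rfl⟩ := hfin.exists_finset_coe
  rw [Set.ncard_coe_finset] at hQ
  simp only [Finset.mem_coe] at *
  let T := q.eraseNone.erase 0
  have hT : ∀ z, z ∈ T ↔ z ≠ 0 ∧ some z ∈ q := fun z => by simp [T]
  have h0 : (0 : ℂ) ∉ T := by simp [T]
  have hrT : ∀ z ∈ T, r * z ∈ T := fun z hz => by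
    rw [hT] at hz ⊢; exact ⟨mul_ne_zero r0 hz.1, hr _ hz.2⟩
  have hsT : ∀ z ∈ T, s * z ∈ T := fun z hz => by
    rw [hT] at hz ⊢; exact ⟨mul_ne_zero s0 hz.1, hs _ hz.2⟩
  have e1 : q.eraseNone.card = if none ∈ q then 3 else 4 := by
    split_ifs with h
    · rw [Finset.card_eraseNone_of_mem h, hQ]
    · rw [Finset.card_eraseNone_of_not_mem h, hQ]
  have e2 : T.card = if some 0 ∈ q then q.eraseNone.card - 1 else q.eraseNone.card := by
    split_ifs with h
    · exact Finset.card_erase_of_mem (by simpa using h)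
    · rw [show T = q.eraseNone from Finset.erase_eq_of_notMem (by simpa using h)]
  have hpos : 0 < T.card := by
    rw [e2, e1]; split_ifs <;> norm_num
  obtain ⟨c, hcT⟩ := Finset.card_pos.1 hpos
  have hc : c ≠ 0 := ((hT c).1 hcT).1
  have hge : 3 ≤ T.card := by
    rw [← Finset.card_eq_three.2 ⟨c, r * c, s * c, ?_, ?_, ?_, rfl⟩]
    · apply Finset.card_le_card
      intro w hw
      simp only [Finset.mem_insert, Finset.mem_singleton] at hw
      rcases hw with rfl | rfl | rfl
      · exact hcT
      · exact hrT _ hcT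
      · exact hsT _ hcT
    · intro h; apply r1; apply mul_right_cancel₀ hc; rw [← h, one_mul]
    · intro h; apply s1; apply mul_right_cancel₀ hc; rw [← h, one_mul]
    · intro h; exact rs (mul_right_cancel₀ hc h)
  have hrn := hfin_smul r0 h0 hrT
  have hsn := hfin_smul s0 h0 hsT
  refine ⟨c, hc, ?_⟩
  by_cases hn : none ∈ q <;> by_cases hz : some 0 ∈ q
  · simp [hn, hz] at e1 e2; omega
  · right; right
    simp only [hn, hz, if_true, if_false] at e1 e2
    rw [e1] at e2
    rw [e2] at hrn hsn
    refine ⟨hrn, hsn, hn, fun z => ?_⟩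
    rw [← hroots3 e2 hc h0 r1 s1 rs r0 s0 hcT hrT hsT z, hT]
    constructor
    · intro h
      refine ⟨?_, h⟩
      rintro rfl
      exact hz h
    · exact fun h => h.2
  · right; left
    simp only [hn, hz, if_true, if_false] at e1 e2
    rw [e1] at e2
    rw [e2] at hrn hsn
    refine ⟨hrn, hsn, hn, fun z => ?_⟩
    rw [← hroots3 e2 hc h0 r1 s1 rs r0 s0 hcT hrT hsT z, hT]
    by_cases h : z = 0
    · subst h; simpa using hz
    · simp [h]
  · left
    simp only [hn, hz, if_false] at e1 e2
    rw [e1] at e2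
    rw [e2] at hrn hsn
    refine ⟨hrn, hsn, hn, fun z => ?_⟩
    have : z ∈ T ↔ z ^ 4 = c ^ 4 := by
      rcases hroot_cases hrn r1 with h | h
      · rcases hroot_cases hsn s1 with h' | h'
        · exact absurd (h.trans h'.symm) rs
        · exact hroots4 e2 hc h' hcT hsT z
      · exact hroots4 e2 hc h hcT hrT z
    rw [← this, hT]
    constructor
    · intro h
      refine ⟨?_, h⟩
      rintro rfl
      exact hz h
    · exact fun h => h.2

theorem HCfg.diag {U Φ A S} (C : HCfg U Φ A S) : ∃ (P : (ℂ × ℂ) ≃ₗ[ℂ] (ℂ × ℂ)) (l m : ℂ),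
    l ≠ m ∧ l ≠ 0 ∧ m ≠ 0 ∧ l ≠ 1 ∧ m ≠ 1 ∧ ∀ a b, A (P (a, b)) = P (l * a, m * b) := by
  classical
  obtain ⟨P, l, m, n, hP⟩ := htri A
  have P0 : ∀ a b, P (a, b) = 0 → a = 0 ∧ b = 0 := by
    intro a b h
    rw [LinearEquiv.map_eq_zero_iff] at h
    simpa using h
  have m0 : m ≠ 0 := by
    rintro rfl
    have := P0 _ _ (C.injA (P (0, 1)) (by rw [hP]; simp))
    simp at this
  have m1 : m ≠ 1 := by
    rintro rfl
    have := P0 _ _ (C.injB (P (0, 1)) (by rw [hP]; simp))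
    simp at this
  have l0 : l ≠ 0 := by
    rintro rfl
    have := P0 _ _ (C.injA (P (m, -n)) (by
      rw [hP, show n * m + m * -n = 0 by ring, zero_mul]; exact map_zero P))
    exact m0 this.1
  have l1 : l ≠ 1 := by
    rintro rfl
    have := P0 _ _ (C.injB (P (1 - m, n)) (by
      rw [hP, show n * (1 - m) + m * n = n by ring, one_mul]))
    exact m1 (sub_eq_zero.1 this.1).symm
  have lm : l ≠ m := by
    rintro rfl
    have hQ := C.card P
    have hfin : {o : Option ℂ | S (P (hphi o))}.Finite :=
      Set.finite_of_ncard_ne_zero (by rw [hQ]; norm_num)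
    obtain ⟨q, hq⟩ := hfin.exists_finset_coe
    rw [← hq, Set.ncard_coe_finset] at hQ
    have hq' : ∀ z, z ∈ q.eraseNone ↔ S (P (1, z)) := by
      intro z
      rw [Finset.mem_eraseNone, ← Finset.mem_coe, hq]
      rfl
    have hcard : q.eraseNone.card ≠ 0 := by
      by_cases h : none ∈ q
      · rw [Finset.card_eraseNone_of_mem h, hQ]; norm_num
      · rw [Finset.card_eraseNone_of_not_mem h, hQ]; norm_num
    have := hfin_add (r := n / l) hcard (by
      intro z hz
      rw [hq'] at hz ⊢
      have := C.smul _ l⁻¹ (inv_ne_zero l0) (C.mapA _ hz)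
      rw [hP, ← map_smul] at this
      convert this using 2
      simp
      field_simp
      constructor
      · trivial
      · ring)
    have hn : n = 0 := by
      rw [div_eq_zero_iff] at this
      exact this.resolve_right l0
    subst hn
    apply C.nonscalar
    refine ⟨l, fun u => ?_⟩
    obtain ⟨⟨a, b⟩, rfl⟩ := P.surjective u
    rw [hP, ← map_smul]
    simp
  refine ⟨(hsh (n / (l - m)) 1 one_ne_zero).trans P, l, m, lm, l0, m0, l1, m1, fun a b => ?_⟩
  have : l - m ≠ 0 := sub_ne_zero.2 lm
  simp only [LinearEquiv.trans_apply, hsh, LinearEquiv.coe_mk, LinearMap.coe_mk, AddHom.coe_mk]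
  rw [hP]
  congr 2
  field_simp
  ring
/-- the cone over a model configuration -/
def HK (f : ℂ → ℂ → Prop) (l m : ℂ) (w : (ℂ × ℂ) × (ℂ × ℂ)) : Prop :=
  (w.2 = 0 ∧ f w.1.1 w.1.2) ∨ (w.1 = 0 ∧ f w.2.1 w.2.2) ∨ (w.2 = w.1 ∧ f w.1.1 w.1.2) ∨
    (w.2 = (l * w.1.1, m * w.1.2) ∧ f w.1.1 w.1.2)

/-- being projectively equivalent to a model -/
def HType (f : ℂ → ℂ → Prop) (l m : ℂ) (U : Set (ℙ ℂ (Fin 4 → ℂ))) : Prop :=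
  ∃ Φ : ((ℂ × ℂ) × (ℂ × ℂ)) ≃ₗ[ℂ] (Fin 4 → ℂ), ∀ w, w ≠ 0 → (HGood U (Φ w) ↔ HK f l m w)

theorem HType.equiv {f l m U U'} (h : HType f l m U) (h' : HType f l m U') :
    ∃ F : (Fin 4 → ℂ) ≃ₗ[ℂ] (Fin 4 → ℂ),
      Projectivization.map F.toLinearMap F.injective '' U = U' := by
  obtain ⟨Φ, hΦ⟩ := h
  obtain ⟨Ψ, hΨ⟩ := h'
  have key : ∀ v (hv : v ≠ 0), HGood U v ↔ HGood U' (Ψ (Φ.symm v)) := by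
    intro v hv
    have h0 : Φ.symm v ≠ 0 := by simpa using hv
    rw [hΨ _ h0, ← hΦ _ h0, LinearEquiv.apply_symm_apply]
  refine ⟨Φ.symm.trans Ψ, ?_⟩
  ext p
  constructor
  · rintro ⟨p, hp, rfl⟩
    obtain ⟨_, h⟩ := (key _ p.rep_nonzero).1 (HGood.rep hp)
    rw [← Projectivization.mk_rep p, Projectivization.map_mk]
    exact h
  · intro hp
    have h0 : Φ (Ψ.symm p.rep) ≠ 0 := by
      simpa using p.rep_nonzero
    obtain ⟨_, h⟩ := (key _ h0).2 (by simpa using HGood.rep hp)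
    refine ⟨_, h, ?_⟩
    rw [Projectivization.map_mk]
    conv_rhs => rw [← Projectivization.mk_rep p]
    congr 1
    simp

theorem HType.of_equiv {f g l m l' m' U} (h : HType f l m U)
    (τ : ((ℂ × ℂ) × (ℂ × ℂ)) ≃ₗ[ℂ] ((ℂ × ℂ) × (ℂ × ℂ)))
    (hτ : ∀ w, HK f l m (τ w) ↔ HK g l' m' w) : HType g l' m' U := by
  obtain ⟨Φ, hΦ⟩ := h
  refine ⟨τ.trans Φ, fun w hw => ?_⟩
  rw [← hτ, ← hΦ _ (by simpa using hw)]
  rfl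

/-- the involution `(x, y) ↦ (x, x - y)` -/
def hrefl : ((ℂ × ℂ) × (ℂ × ℂ)) ≃ₗ[ℂ] ((ℂ × ℂ) × (ℂ × ℂ)) where
  toFun w := (w.1, w.1 - w.2)
  invFun w := (w.1, w.1 - w.2)
  map_add' u v := by
    ext <;> simp <;> ring
  map_smul' r u := by
    ext <;> simp <;> ring
  left_inv u := by simp
  right_inv u := by simp

theorem HType.one_sub {f l m U} (h : HType f l m U) (hf : ∀ a b, f (-a) (-b) ↔ f a b) :
    HType f (1 - l) (1 - m) U := by
  refine h.of_equiv hrefl ?_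
  rintro ⟨⟨a, b⟩, ⟨c, d⟩⟩
  have e1 : ((a, b) - (c, d) = (0 : ℂ × ℂ)) ↔ (c, d) = (a, b) := by
    rw [sub_eq_zero, eq_comm]
  have e2 : ((a, b) - (c, d) = (a, b)) ↔ (c, d) = (0 : ℂ × ℂ) := by
    rw [sub_eq_self]
  have e3 : ((a, b) - (c, d) = (l * a, m * b)) ↔ (c, d) = ((1 - l) * a, (1 - m) * b) := by
    simp only [Prod.mk_sub_mk, Prod.mk.injEq]
    constructor
    · rintro ⟨h1, h2⟩; exact ⟨by linear_combination -h1, by linear_combination -h2⟩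
    · rintro ⟨h1, h2⟩; exact ⟨by linear_combination -h1, by linear_combination -h2⟩
  have e4 : ((a, b) = (0 : ℂ × ℂ) ∧ f (a - c) (b - d)) ↔ ((a, b) = (0 : ℂ × ℂ) ∧ f c d) := by
    apply and_congr_right
    intro h
    simp only [Prod.mk_eq_zero] at h
    rw [h.1, h.2, zero_sub, zero_sub, hf]
  simp only [HK, hrefl, LinearEquiv.coe_mk, LinearMap.coe_mk, AddHom.coe_mk, e1, e2, e3]
  simp only [Prod.mk_sub_mk, e4]
  tauto

theorem HType.inv {f l m U} (h : HType f l m U) (l0 : l ≠ 0) (m0 : m ≠ 0)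
    (hf : ∀ a b, f (l * a) (m * b) ↔ f a b) : HType f l⁻¹ m⁻¹ U := by
  refine h.of_equiv (LinearEquiv.prodComm ℂ (ℂ × ℂ) (ℂ × ℂ)) ?_
  rintro ⟨⟨a, b⟩, ⟨c, d⟩⟩
  have e3 : ((a, b) = (l * c, m * d) ∧ f c d) ↔ ((c, d) = (l⁻¹ * a, m⁻¹ * b) ∧ f a b) := by
    simp only [Prod.mk.injEq]
    constructor
    · rintro ⟨⟨rfl, rfl⟩, h⟩
      exact ⟨⟨by field_simp, by field_simp⟩, (hf _ _).2 h⟩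
    · rintro ⟨⟨rfl, rfl⟩, h⟩
      refine ⟨⟨by field_simp, by field_simp⟩, ?_⟩
      rw [← hf]
      convert h using 1 <;> field_simp
  have e4 : ((a, b) = (c, d) ∧ f c d) ↔ ((c, d) = (a, b) ∧ f a b) := by
    simp only [Prod.mk.injEq]
    constructor <;> (rintro ⟨⟨rfl, rfl⟩, h⟩; exact ⟨⟨rfl, rfl⟩, h⟩)
  simp only [HK, LinearEquiv.prodComm_apply, Prod.swap, e3, e4]
  tauto

theorem HType.swap {f l m U} (h : HType f l m U) : HType (fun a b => f b a) m l U := by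
  refine h.of_equiv ((LinearEquiv.prodComm ℂ ℂ ℂ).prodCongr (LinearEquiv.prodComm ℂ ℂ ℂ)) ?_
  rintro ⟨⟨a, b⟩, ⟨c, d⟩⟩
  simp [HK, and_comm]

/-- first model form -/
def hf3 (a b : ℂ) : Prop := b = 0 ∨ b ^ 3 = a ^ 3

/-- second model form -/
def hf4 (a b : ℂ) : Prop := b ^ 4 = a ^ 4

theorem HCfg.toType {U Φ A S} (C : HCfg U Φ A S) {P : (ℂ × ℂ) ≃ₗ[ℂ] (ℂ × ℂ)} {l m : ℂ}
    (hP : ∀ a b, A (P (a, b)) = P (l * a, m * b)) {f : ℂ → ℂ → Prop}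
    (hf : ∀ u, u ≠ 0 → (S (P u) ↔ f u.1 u.2)) : HType f l m U := by
  refine ⟨(P.prodCongr P).trans Φ, ?_⟩
  rintro ⟨x, y⟩ hw
  have e : ((P.prodCongr P).trans Φ) (x, y) = Φ (P x, P y) := rfl
  rw [e, C.mem]
  have hA : A (P x) = P (l * x.1, m * x.2) := hP x.1 x.2
  rw [hA]
  simp only [LinearEquiv.map_eq_zero_iff, EmbeddingLike.apply_eq_iff_eq, HK]
  have hx : ∀ p : Prop, (p → x = 0 → y = 0) → ((p ∧ S (P x)) ↔ (p ∧ f x.1 x.2)) := by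
    intro p hp
    apply and_congr_right
    intro h
    apply hf
    rintro rfl
    exact hw (by rw [hp h rfl]; rfl)
  rw [hx _ (fun h _ => h), hx _ (fun h h' => h.trans h'),
    hx (y = (l * x.1, m * x.2)) (by rintro rfl rfl; simp)]
  have hy : (x = 0 ∧ S (P y)) ↔ (x = 0 ∧ f y.1 y.2) := by
    apply and_congr_right
    rintro rfl
    apply hf
    rintro rfl
    exact hw rfl
  rw [hy]

theorem HCfg.scale {U Φ A S} (C : HCfg U Φ A S) {P : (ℂ × ℂ) ≃ₗ[ℂ] (ℂ × ℂ)} {l m : ℂ}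
    (hP : ∀ a b, A (P (a, b)) = P (l * a, m * b)) {f : ℂ → ℂ → Prop} {c : ℂ} (hc : c ≠ 0)
    (h1 : ∀ a b, a ≠ 0 → (S (P (1, c * b / a)) ↔ f a b))
    (h2 : ∀ b, b ≠ 0 → (S (P (0, 1)) ↔ f 0 b)) : HType f l m U := by
  have hS : ∀ u (c : ℂ), c ≠ 0 → (S (P (c • u)) ↔ S (P u)) := by
    intro u c hc
    rw [map_smul]
    constructor
    · intro h
      have := C.smul _ c⁻¹ (inv_ne_zero hc) h
      rwa [smul_smul, inv_mul_cancel₀ hc, one_smul] at this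
    · exact C.smul _ c hc
  have hsa : ∀ a b, (hsh 0 c hc) (a, b) = (a, c * b) := fun a b => by simp [hsh]
  refine C.toType (P := (hsh 0 c hc).trans P) (l := l) (m := m) ?_ ?_
  · intro a b
    rw [LinearEquiv.trans_apply, LinearEquiv.trans_apply, hsa, hsa, hP]
    congr 2
    ring
  · rintro ⟨a, b⟩ hu
    rw [LinearEquiv.trans_apply, hsa]
    by_cases ha : a = 0
    · subst ha
      have hb : b ≠ 0 := by rintro rfl; exact hu rfl
      rw [← h2 b hb, ← hS (0, 1) (c * b) (mul_ne_zero hc hb)]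
      simp
    · rw [← h1 a b ha, ← hS (1, c * b / a) a ha]
      have : a • ((1 : ℂ), c * b / a) = (a, c * b) := by
        simp; field_simp
      rw [this]

theorem hf4_neg (a b : ℂ) : hf4 (-a) (-b) ↔ hf4 a b := by
  simp only [hf4]
  rw [show (-b) ^ 4 = b ^ 4 by ring, show (-a) ^ 4 = a ^ 4 by ring]

theorem hf3_neg (a b : ℂ) : hf3 (-a) (-b) ↔ hf3 a b := by
  simp only [hf3]
  rw [show (-b) ^ 3 = -b ^ 3 by ring, show (-a) ^ 3 = -a ^ 3 by ring, neg_inj, neg_eq_zero]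

theorem HType.swap4 {l m U} (h : HType hf4 l m U) : HType hf4 m l U := by
  have := h.swap
  have e : (fun a b => hf4 b a) = hf4 := by
    funext a b
    simp only [hf4, eq_comm]
  rwa [e] at this

theorem htype4 {l m r s : ℂ} {U} (h : HType hf4 l m U) (r1 : r ≠ 1) (s1 : s ≠ 1) (rs : r ≠ s)
    (hr : r ^ 4 = 1) (hs : s ^ 4 = 1) (h1 : m = r * l) (h2 : 1 - m = s * (1 - l)) :
    HType hf4 (1 + Complex.I) (1 - Complex.I) U := by
  have I2 : Complex.I ^ 2 = -1 := Complex.I_sq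
  have sq : ∀ r : ℂ, r ^ 2 = -1 → r = Complex.I ∨ r = -Complex.I := by
    intro r hr
    rw [← I2, sq_eq_sq_iff_eq_or_eq_neg] at hr
    exact hr
  have base1 : ∀ j : ℂ, j ^ 2 = -1 → HType hf4 (1 + j) (1 - j) U →
      HType hf4 (1 + Complex.I) (1 - Complex.I) U := by
    intro j hj h
    rcases sq j hj with rfl | rfl
    · exact h
    · have := h.swap4
      rwa [sub_neg_eq_add, ← sub_eq_add_neg] at this
  have hl : l * (r - s) = 1 - s := by rw [h1] at h2; linear_combination -h2
  have rs' : r - s ≠ 0 := sub_ne_zero.2 rs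
  rcases hroot_cases hr r1 with rfl | hr2
  · rcases hroot_cases hs s1 with rfl | hs2
    · exact absurd rfl rs
    · have e : l = s := by
        apply mul_right_cancel₀ rs'; rw [hl]; linear_combination hs2
      subst e
      apply base1 (-l) (by rw [neg_sq, hs2])
      have := h.one_sub hf4_neg
      rw [h1] at this
      convert this using 1 <;> ring
  · rcases hroot_cases hs s1 with rfl | hs2
    · have e : l = 1 - r := by
        apply mul_right_cancel₀ rs'; rw [hl]; linear_combination hr2
      apply base1 (-r) (by rw [neg_sq, hr2])
      have e2 : m = 1 + r := by rw [h1, e]; linear_combination -hr2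
      rw [e, e2] at h
      convert h using 1 <;> ring
    · have e : s = -r := by
        rcases sq r hr2 with rfl | rfl <;> rcases sq s hs2 with rfl | rfl <;> simp at rs ⊢
      subst e
      have r0 : r ≠ 0 := by rintro rfl; norm_num at hr2
      have e1 : l = (1 - r) / 2 := by
        apply mul_right_cancel₀ rs'; rw [hl]; linear_combination hr2
      have e2 : m = (1 + r) / 2 := by rw [h1, e1]; linear_combination -hr2 / 2
      have p : (1 - r) * (1 + r) = 2 := by linear_combination -hr2
      have n1 : 1 - r ≠ 0 := by intro h; rw [h] at p; norm_num at p
      have n2 : 1 + r ≠ 0 := by intro h; rw [h] at p; norm_num at p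
      have i1 : l⁻¹ = 1 + r := by
        rw [e1, inv_div, div_eq_iff n1, ← p]; ring
      have i2 : m⁻¹ = 1 - r := by
        rw [e2, inv_div, div_eq_iff n2, ← p]
      have l0 : l ≠ 0 := by rw [e1]; exact div_ne_zero n1 two_ne_zero
      have m0 : m ≠ 0 := by rw [h1]; exact mul_ne_zero r0 l0
      apply base1 r hr2
      rw [← i1, ← i2]
      apply h.inv l0 m0
      intro a b
      simp only [hf4]
      rw [h1, show (r * l * b) ^ 4 = l ^ 4 * b ^ 4 by linear_combination l ^ 4 * b ^ 4 * hr,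
        mul_pow]
      exact mul_right_inj' (pow_ne_zero 4 l0)

theorem htype3 {w l m r s : ℂ} {U} (hw : w ^ 2 + w + 1 = 0) (h : HType hf3 l m U)
    (r1 : r ≠ 1) (s1 : s ≠ 1) (rs : r ≠ s)
    (hr : r ^ 3 = 1) (hs : s ^ 3 = 1) (h1 : m = r * l) (h2 : 1 - m = s * (1 - l)) :
    HType hf3 (-w) (1 + w) U := by
  have er : r ^ 2 + r + 1 = 0 := by
    apply mul_left_cancel₀ (sub_ne_zero.2 r1); linear_combination hr
  have es : s ^ 2 + s + 1 = 0 := by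
    apply mul_left_cancel₀ (sub_ne_zero.2 s1); linear_combination hs
  have e : s = -1 - r := by
    apply mul_left_cancel₀ (sub_ne_zero.2 rs); linear_combination er - es
  have rs' : r - s ≠ 0 := sub_ne_zero.2 rs
  have hl : l * (r - s) = 1 - s := by rw [h1] at h2; linear_combination -h2
  have el : l = -r := by
    apply mul_right_cancel₀ rs'; rw [hl, e]; linear_combination 2 * er
  have em : m = 1 + r := by rw [h1, el]; linear_combination -er
  have : (r - w) * (r - (-1 - w)) = 0 := by linear_combination er - hw
  rcases mul_eq_zero.1 this with h' | h'
  · have := sub_eq_zero.1 h'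
    subst this
    rwa [el, em] at h
  · have := sub_eq_zero.1 h'
    subst this
    have := h.one_sub hf3_neg
    rw [el, em] at this
    convert this using 1 <;> ring

theorem HCfg.classify {U Φ A S} (C : HCfg U Φ A S) {w : ℂ} (hw : w ^ 2 + w + 1 = 0) :
    HType hf3 (-w) (1 + w) U ∨ HType hf4 (1 + Complex.I) (1 - Complex.I) U := by
  obtain ⟨P, l, m, lm, l0, m0, l1, m1, hP⟩ := C.diag
  have l1' : 1 - l ≠ 0 := sub_ne_zero.2 l1.symm
  have m1' : 1 - m ≠ 0 := sub_ne_zero.2 m1.symm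
  have r1 : m / l ≠ 1 := by
    rw [Ne, div_eq_one_iff_eq l0]; exact lm.symm
  have s1 : (1 - m) / (1 - l) ≠ 1 := by
    rw [Ne, div_eq_one_iff_eq l1', sub_right_inj]; exact lm.symm
  have rs : m / l ≠ (1 - m) / (1 - l) := by
    rw [Ne, div_eq_div_iff l0 l1']
    intro h
    exact lm (by linear_combination -h)
  have r0 : m / l ≠ 0 := div_ne_zero m0 l0
  have s0 : (1 - m) / (1 - l) ≠ 0 := div_ne_zero m1' l1'
  have h1 : m = m / l * l := by field_simp
  have h2 : 1 - m = (1 - m) / (1 - l) * (1 - l) := by field_simp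
  obtain ⟨c, hc, hcase⟩ := hcomb (C.card P) r1 s1 rs r0 s0
    (by
      intro z hz
      have hz : S (P (1, z)) := hz
      have := C.smul _ l⁻¹ (inv_ne_zero l0) (C.mapA _ hz)
      rw [hP, ← map_smul] at this
      change S (P (1, _))
      convert this using 2
      ext
      · simp [l0]
      · simp; ring)
    (by
      intro z hz
      have hz : S (P (1, z)) := hz
      have := C.smul _ (1 - l)⁻¹ (inv_ne_zero l1') (C.mapB _ hz)
      rw [hP, ← map_sub, ← map_smul] at this
      change S (P (1, _))
      convert this using 2
      ext
      · simp [l1']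
      · simp; ring)
  have e4 : ∀ a b : ℂ, a ≠ 0 → ((c * b / a) ^ 4 = c ^ 4 ↔ b ^ 4 = a ^ 4) := by
    intro a b ha
    rw [div_pow, mul_pow, div_eq_iff (pow_ne_zero 4 ha)]
    exact mul_right_inj' (pow_ne_zero 4 hc)
  have e3 : ∀ a b : ℂ, a ≠ 0 → ((c * b / a) ^ 3 = c ^ 3 ↔ b ^ 3 = a ^ 3) := by
    intro a b ha
    rw [div_pow, mul_pow, div_eq_iff (pow_ne_zero 3 ha)]
    exact mul_right_inj' (pow_ne_zero 3 hc)
  rcases hcase with ⟨hr, hs, hn, hz⟩ | ⟨hr, hs, hn, hz⟩ | ⟨hr, hs, hn, hz⟩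
  · right
    have hn : ¬ S (P (0, 1)) := hn
    have hz : ∀ z, S (P (1, z)) ↔ z ^ 4 = c ^ 4 := hz
    refine htype4 (C.scale (f := hf4) hP hc ?_ ?_) r1 s1 rs hr hs h1 h2
    · intro a b ha
      rw [hz, e4 a b ha]; rfl
    · intro b hb
      simp [hf4, hn, hb]
  · left
    have hn : ¬ S (P (0, 1)) := hn
    have hz : ∀ z, S (P (1, z)) ↔ (z = 0 ∨ z ^ 3 = c ^ 3) := hz
    refine htype3 hw (C.scale (f := hf3) hP hc ?_ ?_) r1 s1 rs hr hs h1 h2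
    · intro a b ha
      rw [hz, e3 a b ha]
      simp [hf3, ha, hc]
    · intro b hb
      simp [hf3, hn, hb]
  · left
    have hn : S (P (0, 1)) := hn
    have hz : ∀ z, S (P (1, z)) ↔ z ^ 3 = c ^ 3 := hz
    have ht : HType (fun a b => hf3 b a) l m U := by
      refine C.scale hP hc ?_ ?_
      · intro a b ha
        rw [hz, e3 a b ha]
        simp [hf3, ha, eq_comm]
      · intro b hb
        simp [hf3, hn]
    refine htype3 hw ht.swap (r := (m / l)⁻¹) (s := ((1 - m) / (1 - l))⁻¹) ?_ ?_ ?_ ?_ ?_ ?_ ?_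
    · simpa using inv_ne_one.2 r1
    · exact inv_ne_one.2 s1
    · exact fun h => rs (inv_injective h)
    · rw [inv_pow, hr, inv_one]
    · rw [inv_pow, hs, inv_one]
    · field_simp
    · field_simp

theorem hexists16 : ∃ W : Set (ℙ ℂ (Fin 4 → ℂ)), W.ncard = 16 := by
  have hne : ∀ z : ℂ, (![1, z, 0, 0] : Fin 4 → ℂ) ≠ 0 := by
    intro z h
    have := congrFun h 0
    simp at this
  have inj : Function.Injective (fun z : ℂ => Projectivization.mk ℂ ![1, z, 0, 0] (hne z)) := by
    intro z z' h
    rw [Projectivization.mk_eq_mk_iff'] at h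
    obtain ⟨a, ha⟩ := h
    have h0 := congrFun ha 0
    have h1 := congrFun ha 1
    simp at h0 h1
    rw [h0, one_mul] at h1
    exact h1.symm
  have := Infinite.of_injective _ inj
  obtain ⟨W, -, -, h⟩ := (Set.infinite_univ (α := ℙ ℂ (Fin 4 → ℂ))).exists_subset_ncard_eq 16
  exact ⟨W, h⟩

theorem hmodel (f l m) : ∃ W : Set (ℙ ℂ (Fin 4 → ℂ)), W.ncard = 16 ∧
    ∀ U : Set (ℙ ℂ (Fin 4 → ℂ)), U.ncard = 16 → HType f l m U →
      ∃ F : (Fin 4 → ℂ) ≃ₗ[ℂ] (Fin 4 → ℂ),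
        Projectivization.map F.toLinearMap F.injective '' W = U := by
  by_cases h : ∃ W : Set (ℙ ℂ (Fin 4 → ℂ)), W.ncard = 16 ∧ HType f l m W
  · obtain ⟨W, hW, ht⟩ := h
    exact ⟨W, hW, fun U _ hU => ht.equiv hU⟩
  · obtain ⟨W, hW⟩ := hexists16
    exact ⟨W, hW, fun U h1 h2 => absurd ⟨U, h1, h2⟩ h⟩

/-- There are two 16-point subsets `W₁, W₂` of `ℙ³` such that every
16-point set `Z = Z 0 ∪ Z 1 ∪ Z 2 ∪ Z 3` satisfying the half-grid hypotheses is
projectively equivalent to `W₁` or to `W₂`: some linear automorphism of `ℂ⁴` induces a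
projective transformation of `ℙ³` mapping `W₁` onto `Z` or mapping `W₂` onto `Z`.  In
other words, up to projective equivalence there are at most two sets of 16 points
distributed evenly on 4 skew lines satisfying the half-grid hypotheses. -/
theorem halfGrid_classification_two_models :
    ∃ W₁ W₂ : Set (ℙ ℂ (Fin 4 → ℂ)), W₁.ncard = 16 ∧ W₂.ncard = 16 ∧
      ∀ (R : Fin 4 → Submodule ℂ (Fin 4 → ℂ)) (Z : Fin 4 → Set (ℙ ℂ (Fin 4 → ℂ))),
        HalfGridHyp R Z →
        (∃ F : (Fin 4 → ℂ) ≃ₗ[ℂ] (Fin 4 → ℂ),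
          Projectivization.map F.toLinearMap F.injective '' W₁ = ⋃ x, Z x) ∨
        (∃ F : (Fin 4 → ℂ) ≃ₗ[ℂ] (Fin 4 → ℂ),
          Projectivization.map F.toLinearMap F.injective '' W₂ = ⋃ x, Z x) := by
  obtain ⟨w, hw⟩ : ∃ w : ℂ, w ^ 2 + w + 1 = 0 := by
    obtain ⟨t, ht⟩ := IsAlgClosed.exists_pow_nat_eq (-3 : ℂ) (n := 2) (by norm_num)
    exact ⟨(-1 + t) / 2, by linear_combination ht / 4⟩
  obtain ⟨W₁, c₁, h₁⟩ := hmodel hf3 (-w) (1 + w)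
  obtain ⟨W₂, c₂, h₂⟩ := hmodel hf4 (1 + Complex.I) (1 - Complex.I)
  refine ⟨W₁, W₂, c₁, c₂, fun R Z H => ?_⟩
  obtain ⟨Φ, A, S, C⟩ := H.cfg
  rcases C.classify hw with h | h
  · exact Or.inl (h₁ _ H.ncard16 h)
  · exact Or.inr (h₂ _ H.ncard16 h)
end

section
/- Let Z = Z_a ∪ Z_b ∪ Z_c ∪ Z_d satisfy the half-grid hypotheses, and assume in addition that the only 4-element collinear subsets of Z are Z_a, Z_b, Z_c and Z_d (so exactly 4 lines contain 4 of the configuration points). Then Z is projectively equivalent to configuration B: there exists a linear automorphism of ℂ⁴ whose induced projective transformation maps Z onto configuration B. -/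
open Projectivization
open scoped LinearAlgebra.Projectivization

/-- Homogeneous coordinates of the 16 points of configuration B (the harmonic
configuration): `vB x i` is the `i`-th point of the quadruple on the `x`-th line. -/
def vB : Fin 4 → Fin 4 → Fin 4 → ℂ :=
  ![![![1,0,0,0], ![0,0,1,0], ![1,0,1,0], ![1,0,-1,0]],
    ![![0,1,0,0], ![0,0,0,1], ![0,1,0,1], ![0,1,0,-1]],
    ![![1,1,0,0], ![0,0,1,1], ![1,1,1,1], ![1,1,-1,-1]],
    ![![1,0,0,-1], ![0,1,1,0], ![1,1,1,-1], ![-1,1,1,1]]]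

lemma vB_ne_zero : ∀ x i, vB x i ≠ 0 := by
  intro x i
  fin_cases x <;> fin_cases i <;> simp [vB, Matrix.cons_eq_zero_iff]

/-- The 16 points of configuration B in `ℙ³`. -/
noncomputable def ptB (x i : Fin 4) : ℙ ℂ (Fin 4 → ℂ) :=
  Projectivization.mk ℂ (vB x i) (vB_ne_zero x i)

/-- The quadruple `Z_x` of configuration B (`x = 0,1,2,3` for `a,b,c,d`). -/
noncomputable def ZB (x : Fin 4) : Set (ℙ ℂ (Fin 4 → ℂ)) := Set.range (ptB x)

/-- Configuration B as a set of 16 points of `ℙ³`. -/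
noncomputable def configB : Set (ℙ ℂ (Fin 4 → ℂ)) := ⋃ x, ZB x

/-- `w` is a nonzero vector whose class lies in `S`. -/
def IsPt (S : Set (ℙ ℂ (Fin 4 → ℂ))) (w : Fin 4 → ℂ) : Prop :=
  ∃ h : w ≠ 0, Projectivization.mk ℂ w h ∈ S

lemma IsPt.smul {S : Set (ℙ ℂ (Fin 4 → ℂ))} {w : Fin 4 → ℂ} {c : ℂ} (hc : c ≠ 0)
    (h : IsPt S w) : IsPt S (c • w) := by
  obtain ⟨h0, h⟩ := h
  refine ⟨smul_ne_zero hc h0, ?_⟩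
  have : Projectivization.mk ℂ (c • w) (smul_ne_zero hc h0) = Projectivization.mk ℂ w h0 := by
    rw [Projectivization.mk_eq_mk_iff']
    exact ⟨c, rfl⟩
  rwa [this]

lemma IsPt.of_smul {S : Set (ℙ ℂ (Fin 4 → ℂ))} {w : Fin 4 → ℂ} {c : ℂ} (hc : c ≠ 0)
    (h : IsPt S (c • w)) : IsPt S w := by
  have := h.smul (inv_ne_zero hc)
  rwa [smul_smul, inv_mul_cancel₀ hc, one_smul] at this

lemma mk_sub_le {w : Fin 4 → ℂ} {h : w ≠ 0} {U : Submodule ℂ (Fin 4 → ℂ)} :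
    (Projectivization.mk ℂ w h).submodule ≤ U ↔ w ∈ U := by
  rw [Projectivization.submodule_mk, Submodule.span_singleton_le_iff_mem]

lemma IsPt.mem {R : Fin 4 → Submodule ℂ (Fin 4 → ℂ)} {Z : Fin 4 → Set (ℙ ℂ (Fin 4 → ℂ))}
    (hyp : HalfGridHyp R Z) {x : Fin 4} {w : Fin 4 → ℂ} (h : IsPt (Z x) w) : w ∈ R x := by
  obtain ⟨h0, h⟩ := h
  exact mk_sub_le.1 (hyp.mem_line x _ h)

lemma skew_zero_s7 {R : Fin 4 → Submodule ℂ (Fin 4 → ℂ)} {Z : Fin 4 → Set (ℙ ℂ (Fin 4 → ℂ))}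
    (hyp : HalfGridHyp R Z) {x y : Fin 4} (hxy : x ≠ y) {w : Fin 4 → ℂ} (h : w ∈ R x)
    (h' : w ∈ R y) : w = 0 := by
  have : w ∈ R x ⊓ R y := ⟨h, h'⟩
  rw [hyp.skew x y hxy] at this
  simpa using this

abbrev V2 := Fin 2 → ℂ

lemma span_pair_of_finrank {E : Type*} [AddCommGroup E] [Module ℂ E] {L : Submodule ℂ E}
    (hL : Module.finrank ℂ L = 2) {p q u : E} (hp : p ∈ L) (hq : q ∈ L) (hu : u ∈ L)
    (hli : LinearIndependent ℂ ![p, q]) : ∃ s t : ℂ, s • p + t • q = u := by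
  have hfd : FiniteDimensional ℂ L := Module.finite_of_finrank_eq_succ hL
  have h1 : Submodule.span ℂ (Set.range ![p, q]) ≤ L := by
    rw [Submodule.span_le]
    rintro _ ⟨i, rfl⟩
    fin_cases i <;> simp [hp, hq]
  have h2 : Submodule.span ℂ (Set.range ![p, q]) = L := by
    apply Submodule.eq_of_le_of_finrank_eq h1
    rw [finrank_span_eq_card hli, hL]; simp
  rw [← h2] at hu
  simp only [Matrix.range_cons, Matrix.range_empty, Set.union_empty, Set.singleton_union] at hu
  exact Submodule.mem_span_pair.1 hu

lemma surj_of_inj {f : V2 →ₗ[ℂ] (Fin 4 → ℂ)} (hf : Function.Injective f)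
    {L : Submodule ℂ (Fin 4 → ℂ)} (hL : Module.finrank ℂ L = 2) (hm : ∀ v, f v ∈ L)
    {w : Fin 4 → ℂ} (hw : w ∈ L) : ∃ v, f v = w := by
  have h1 : LinearMap.range f ≤ L := by
    rintro _ ⟨v, rfl⟩; exact hm v
  have h2 : LinearMap.range f = L := by
    apply Submodule.eq_of_le_of_finrank_eq h1
    rw [LinearMap.finrank_range_of_inj hf, hL]; simp
  rw [← h2] at hw
  exact hw

lemma grid_step {R : Fin 4 → Submodule ℂ (Fin 4 → ℂ)} {Z : Fin 4 → Set (ℙ ℂ (Fin 4 → ℂ))}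
    (hyp : HalfGridHyp R Z) (i j k x : Fin 4) (hij : i ≠ j) (hik : i ≠ k) (hjk : j ≠ k)
    (hix : i ≠ x) (hjx : j ≠ x) (hkx : k ≠ x) (f g : V2 →ₗ[ℂ] (Fin 4 → ℂ))
    (hf : Function.Injective f) (hg : Function.Injective g)
    (hfi : ∀ v, f v ∈ R i) (hgj : ∀ v, g v ∈ R j) (hk : ∀ v, f v + g v ∈ R k)
    (v : V2) (hv : IsPt (Z i) (f v)) : IsPt (Z j) (g v) ∧ IsPt (Z k) (f v + g v) := by
  obtain ⟨ℓ, hr, hs, hu, he⟩ := hyp.grid x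
  have key : ∀ {w : Fin 4 → ℂ} (h0 : w ≠ 0) (m y : Fin 4), y ≠ x → w ∈ ℓ m → w ∈ R y →
      IsPt (Z y) w := by
    intro w h0 m y hy h1 h2
    have : Projectivization.mk ℂ w h0 ∈ (⋃ y, Z y) \ Z x := by
      rw [← he]; exact ⟨m, y, hy, mk_sub_le.2 h1, mk_sub_le.2 h2⟩
    obtain ⟨h3, -⟩ := this
    obtain ⟨y', h3⟩ := Set.mem_iUnion.1 h3
    by_cases hyy : y' = y
    · subst hyy; exact ⟨h0, h3⟩
    · exact absurd (skew_zero_s7 hyp hyy (mk_sub_le.1 (hyp.mem_line _ _ h3)) h2) h0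
  obtain ⟨hv0, hvZ⟩ := hv
  have hv0' : v ≠ 0 := by rintro rfl; simp at hv0
  have hmem : Projectivization.mk ℂ (f v) hv0 ∈ (⋃ y, Z y) \ Z x := by
    refine ⟨Set.mem_iUnion.2 ⟨i, hvZ⟩, fun h => hv0 ?_⟩
    exact skew_zero_s7 hyp hix (hfi v) (mk_sub_le.1 (hyp.mem_line _ _ h))
  rw [← he] at hmem
  obtain ⟨m, y, hy, h1, h2⟩ := hmem
  rw [mk_sub_le] at h1 h2
  obtain ⟨p, ⟨hp1, hp2⟩, -⟩ := hu m j hjx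
  obtain ⟨q, ⟨hq1, hq2⟩, -⟩ := hu m k hkx
  induction p using Projectivization.ind with | h w hw0 => ?_
  induction q using Projectivization.ind with | h u hu0 => ?_
  rw [mk_sub_le] at hp1 hp2 hq1 hq2
  have hfg : Function.Injective (f + g) := by
    rw [injective_iff_map_eq_zero]
    intro a ha
    have h3 : f a = g (-a) := by
      rw [map_neg]; exact eq_neg_of_add_eq_zero_left ha
    have h4 : f a = 0 := skew_zero_s7 hyp hij (hfi a) (h3 ▸ hgj (-a))
    exact hf (by simpa using h4)
  obtain ⟨w', rfl⟩ := surj_of_inj hg (hyp.finrank_eq j) hgj hp2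
  obtain ⟨u', rfl⟩ := surj_of_inj hfg (hyp.finrank_eq k) hk hq2
  have hli : LinearIndependent ℂ ![f v, g w'] := by
    rw [LinearIndependent.pair_iff' hv0]
    intro c hc
    apply hw0
    exact skew_zero_s7 hyp hij (hc ▸ (R i).smul_mem c (hfi v)) (hgj w')
  obtain ⟨s, t, hst⟩ := span_pair_of_finrank (hr m) h1 hp1 hq1 hli
  have h3 : f (s • v - u') = g (u' - t • w') := by
    simp only [map_sub, map_smul]
    simp only [LinearMap.add_apply] at hst
    rw [sub_eq_sub_iff_add_eq_add, hst, add_comm]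
  have h4 : f (s • v - u') = 0 := skew_zero_s7 hyp hij (hfi _) (h3 ▸ hgj _)
  have h5 : s • v = u' := sub_eq_zero.1 (hf (by simpa using h4))
  have h6 : u' = t • w' := sub_eq_zero.1 (hg (by rw [← h3, h4]; simp))
  have hu'0 : u' ≠ 0 := by rintro rfl; simp at hu0
  have hs0 : s ≠ 0 := by rintro rfl; apply hu'0; rw [← h5, zero_smul]
  have ht0 : t ≠ 0 := by rintro rfl; apply hu'0; rw [h6, zero_smul]
  constructor
  · have h7 := (key hw0 m j hjx hp1 hp2).smul ht0
    rw [← map_smul, ← h6, ← h5, map_smul] at h7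
    exact h7.of_smul hs0
  · have h7 := key hu0 m k hkx hq1 hq2
    rw [← h5, map_smul] at h7
    exact h7.of_smul hs0

lemma exists_maps {R0 R1 R2 : Submodule ℂ (Fin 4 → ℂ)} (h0 : Module.finrank ℂ R0 = 2)
    (h1 : Module.finrank ℂ R1 = 2) (h2 : Module.finrank ℂ R2 = 2) (h01 : R0 ⊓ R1 = ⊥)
    (h02 : R0 ⊓ R2 = ⊥) (h12 : R1 ⊓ R2 = ⊥) :
    ∃ (a : V2 ≃ₗ[ℂ] R0) (b : V2 ≃ₗ[ℂ] R1), ∀ v, (a v : Fin 4 → ℂ) + (b v : Fin 4 → ℂ) ∈ R2 := by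
  have hc : IsCompl R0 R1 := by
    rw [Submodule.isCompl_iff_disjoint _ _ (by rw [h0, h1]; simp), disjoint_iff]
    exact h01
  let r : V2 ≃ₗ[ℂ] R2 := LinearEquiv.ofFinrankEq _ _ (by rw [h2]; simp)
  let a : V2 →ₗ[ℂ] R0 := (R0.projectionOnto R1 hc).comp (R2.subtype.comp r.toLinearMap)
  let b : V2 →ₗ[ℂ] R1 := (R1.projectionOnto R0 hc.symm).comp (R2.subtype.comp r.toLinearMap)
  have ha : Function.Injective a := by
    rw [injective_iff_map_eq_zero]
    intro v hv
    have h3 : ((r v : R2) : Fin 4 → ℂ) ∈ R1 := by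
      simpa [a, Submodule.projectionOnto_apply_eq_zero_iff] using hv
    have h4 : ((r v : R2) : Fin 4 → ℂ) ∈ R1 ⊓ R2 := ⟨h3, (r v).2⟩
    rw [h12] at h4
    simpa using h4
  have hb : Function.Injective b := by
    rw [injective_iff_map_eq_zero]
    intro v hv
    have h3 : ((r v : R2) : Fin 4 → ℂ) ∈ R0 := by
      simpa [b, Submodule.projectionOnto_apply_eq_zero_iff] using hv
    have h4 : ((r v : R2) : Fin 4 → ℂ) ∈ R0 ⊓ R2 := ⟨h3, (r v).2⟩
    rw [h02] at h4
    simpa using h4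
  refine ⟨a.linearEquivOfInjective ha (by rw [h0]; simp),
    b.linearEquivOfInjective hb (by rw [h1]; simp), fun v => ?_⟩
  have : (a v : Fin 4 → ℂ) + (b v : Fin 4 → ℂ) = r v := by
    simp only [a, b, LinearMap.comp_apply]
    exact Submodule.projection_add_projection_eq_self hc _
  simp only [LinearMap.linearEquivOfInjective_apply]
  rw [this]; exact (r v).2

lemma fin4_perm : ∀ f : Fin 4 → Fin 4, Function.Injective f → (∀ x, f x ≠ x) →
    ∀ x, f (f (f (f x))) = x := by
  decide +kernel

lemma iter4 {α : Type*} {S : Set α} (hS : S.ncard = 4) (f : α → α) (hf : Function.Injective f)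
    (hm : ∀ x ∈ S, f x ∈ S) (hfp : ∀ x ∈ S, f x ≠ x) (x : α) (hx : x ∈ S) :
    f (f (f (f x))) = x := by
  have hfin : S.Finite := Set.finite_of_ncard_ne_zero (by omega)
  have : Finite S := hfin
  have hc : Nat.card S = 4 := hS
  let e : S ≃ Fin 4 := (Finite.equivFin S).trans (finCongr hc)
  let F : S → S := fun s => ⟨f s, hm s s.2⟩
  have h := fin4_perm (fun i => e (F (e.symm i)))
    (fun i j hij => by
      have h1 := e.injective hij
      have h2 : f (e.symm i) = f (e.symm j) := congrArg Subtype.val h1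
      exact e.symm.injective (Subtype.ext (hf h2)))
    (fun i hi => by
      have h1 : F (e.symm i) = e.symm i := by rw [Equiv.eq_symm_apply]; exact hi
      exact hfp _ (e.symm i).2 (congrArg Subtype.val h1))
    (e ⟨x, hx⟩)
  simp only [Equiv.symm_apply_apply] at h
  exact congrArg Subtype.val (e.injective h)

lemma ptB_injective (x : Fin 4) : Function.Injective (ptB x) := by
  intro i j hij
  unfold ptB at hij
  rw [Projectivization.mk_eq_mk_iff'] at hij
  obtain ⟨c, hc⟩ := hij
  have e0 := congrFun hc 0
  have e1 := congrFun hc 1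
  have e2 := congrFun hc 2
  have e3 := congrFun hc 3
  fin_cases x <;> fin_cases i <;> fin_cases j <;> first | rfl | (exfalso; simp [vB] at e0 e1 e2 e3; try grind)

lemma finish {Z : Fin 4 → Set (ℙ ℂ (Fin 4 → ℂ))} (hZ : ∀ x, (Z x).ncard = 4)
    (σ : Fin 4 → Fin 4) (hσ : Function.Surjective σ)
    (F : (Fin 4 → ℂ) ≃ₗ[ℂ] (Fin 4 → ℂ)) (h : ∀ x i, IsPt (Z (σ x)) (F (vB x i))) :
    Projectivization.map F.toLinearMap F.injective '' configB = ⋃ x, Z x := by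
  have key : ∀ x, Projectivization.map F.toLinearMap F.injective '' ZB x = Z (σ x) := by
    intro x
    apply Set.eq_of_subset_of_ncard_le
    · rintro _ ⟨_, ⟨i, rfl⟩, rfl⟩
      obtain ⟨h0, h1⟩ := h x i
      exact h1
    · rw [Set.ncard_image_of_injective _ (Projectivization.map_injective _ F.injective), hZ]
      unfold ZB
      rw [← Set.image_univ, Set.ncard_image_of_injective _ (ptB_injective x), Set.ncard_univ]
      simp
    · exact Set.finite_of_ncard_ne_zero (by rw [hZ]; omega)
  unfold configB
  rw [Set.image_iUnion]
  simp only [key]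
  exact hσ.iUnion_comp Z

lemma finish2 {R : Fin 4 → Submodule ℂ (Fin 4 → ℂ)} {Z : Fin 4 → Set (ℙ ℂ (Fin 4 → ℂ))}
    (hyp : HalfGridHyp R Z)
    (σ : Fin 4 → Fin 4) (hσ : Function.Surjective σ) (h01 : σ 0 ≠ σ 1)
    (f g : V2 →ₗ[ℂ] (Fin 4 → ℂ)) (K : V2 →ₗ[ℂ] V2)
    (hf : Function.Injective f) (hg : Function.Injective g)
    (hfi : ∀ v, f v ∈ R (σ 0)) (hgj : ∀ v, g v ∈ R (σ 1)) (A : V2 → Prop)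
    (h0 : ∀ u, A u → IsPt (Z (σ 0)) (f u)) (h1 : ∀ u, A u → IsPt (Z (σ 1)) (g u))
    (h2 : ∀ u, A u → IsPt (Z (σ 2)) (f u + g u))
    (h3 : ∀ u, A u → IsPt (Z (σ 3)) (f u + g (K u)))
    (v : V2) (hK : K (K v) = -v) (hli : ∀ c : ℂ, c • v ≠ K v) (hv0 : v ≠ 0)
    (a1 : A v) (a2 : A (-K v)) (a3 : A (v - K v)) (a4 : A (v + K v)) :
    ∃ F : (Fin 4 → ℂ) ≃ₗ[ℂ] (Fin 4 → ℂ),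
      Projectivization.map F.toLinearMap F.injective '' configB = ⋃ x, Z x := by
  let π : Fin 4 → ((Fin 4 → ℂ) →ₗ[ℂ] ℂ) := fun i => LinearMap.proj i
  let G : (Fin 4 → ℂ) →ₗ[ℂ] (Fin 4 → ℂ) :=
    f.comp ((π 0).smulRight v - (π 2).smulRight (K v)) +
    g.comp ((π 1).smulRight v - (π 3).smulRight (K v))
  have hGa : ∀ x, G x = f (x 0 • v - x 2 • K v) + g (x 1 • v - x 3 • K v) := fun x => rfl
  have hpair : ∀ s t : ℂ, s • v - t • K v = 0 → s = 0 ∧ t = 0 := by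
    intro s t hst
    have := (LinearIndependent.pair_iff.1 ((LinearIndependent.pair_iff' hv0).2 hli)) s (-t)
      (by rw [neg_smul, ← sub_eq_add_neg]; exact hst)
    simpa using this
  have hG : Function.Injective G := by
    rw [injective_iff_map_eq_zero]
    intro x hx
    rw [hGa] at hx
    have e1 := eq_neg_of_add_eq_zero_left hx
    have e2 : f (x 0 • v - x 2 • K v) = 0 := by
      refine skew_zero_s7 hyp h01 (hfi _) ?_
      rw [e1]; exact (R _).neg_mem (hgj _)
    have e3 : g (x 1 • v - x 3 • K v) = 0 := by rw [e2, zero_add] at hx; exact hx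
    obtain ⟨x0, x2⟩ := hpair _ _ ((map_eq_zero_iff f hf).1 e2)
    obtain ⟨x1, x3⟩ := hpair _ _ ((map_eq_zero_iff g hg).1 e3)
    ext i; fin_cases i <;> simp [x0, x1, x2, x3]
  refine ⟨LinearEquiv.ofInjectiveEndo G hG, finish hyp.ncard_eq σ hσ _ ?_⟩
  have hcoe : ∀ x, (LinearEquiv.ofInjectiveEndo G hG) x = G x := fun x => rfl
  intro x i
  rw [hcoe, hGa]
  have c0 : ∀ u, A u → IsPt (Z (σ 0)) (f u + g 0) := fun u hu => by simpa using h0 u hu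
  have c1 : ∀ u, A u → IsPt (Z (σ 1)) (f 0 + g u) := fun u hu => by simpa using h1 u hu
  fin_cases x <;> fin_cases i
  · convert c0 _ a1 using 3 <;> simp [vB]
  · convert c0 _ a2 using 3 <;> simp [vB]
  · convert c0 _ a3 using 3 <;> simp [vB]
  · convert c0 _ a4 using 3 <;> simp [vB]
  · convert c1 _ a1 using 3 <;> simp [vB]
  · convert c1 _ a2 using 3 <;> simp [vB]
  · convert c1 _ a3 using 3 <;> simp [vB]
  · convert c1 _ a4 using 3 <;> simp [vB]
  · convert h2 _ a1 using 3 <;> simp [vB]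
  · convert h2 _ a2 using 3 <;> simp [vB]
  · convert h2 _ a3 using 3 <;> simp [vB]
  · convert h2 _ a4 using 3 <;> simp [vB]
  · convert h3 _ a1 using 3 <;> simp [vB]
  · convert h3 _ a2 using 3 <;> simp [vB, hK]
  · convert h3 _ a3 using 3 <;> simp [vB, hK, add_comm]
  · have := (h3 _ a4).smul (c := -1) (by norm_num)
    rw [smul_add, ← map_smul, ← map_smul] at this
    convert this using 3 <;> simp [vB, hK] <;> abel

lemma iter_pt {S : Set (ℙ ℂ (Fin 4 → ℂ))} (hS : S.ncard = 4) (a : V2 →ₗ[ℂ] (Fin 4 → ℂ))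
    (ha : Function.Injective a) (hr : ∀ w, IsPt S w → ∃ v, a v = w)
    (T : V2 →ₗ[ℂ] V2) (hT : Function.Injective T)
    (hm : ∀ v, IsPt S (a v) → IsPt S (a (T v)))
    (hfp : ∀ v, IsPt S (a v) → ∀ c : ℂ, c • v ≠ T v) (v : V2) (hv : IsPt S (a v)) :
    ∃ c : ℂ, c • v = T (T (T (T v))) := by
  let φ : ℙ ℂ V2 → ℙ ℂ (Fin 4 → ℂ) := Projectivization.map a ha
  have hφ : Function.Injective φ := Projectivization.map_injective _ ha
  have hmem : ∀ (u : V2) (h0 : u ≠ 0), Projectivization.mk ℂ u h0 ∈ φ ⁻¹' S ↔ IsPt S (a u) := by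
    intro u h0
    constructor
    · intro h
      exact ⟨fun h' => h0 (ha (by simpa using h')), h⟩
    · rintro ⟨h1, h2⟩
      exact h2
  have hS' : (φ ⁻¹' S).ncard = 4 := by
    rw [Set.ncard_preimage_of_injective_subset_range hφ, hS]
    intro p hp
    induction p using Projectivization.ind with | h w hw0 => ?_
    obtain ⟨u, rfl⟩ := hr w ⟨hw0, hp⟩
    have hu0 : u ≠ 0 := by rintro rfl; simp at hw0
    exact ⟨Projectivization.mk ℂ u hu0, rfl⟩
  have hv0 : v ≠ 0 := by
    rintro rfl
    obtain ⟨h, -⟩ := hv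
    simp at h
  have h := iter4 hS' (Projectivization.map T hT) (Projectivization.map_injective _ hT)
    (by
      intro p hp
      induction p using Projectivization.ind with | h u hu0 => ?_
      rw [Projectivization.map_mk, hmem]
      rw [hmem] at hp
      exact hm u hp)
    (by
      intro p hp
      induction p using Projectivization.ind with | h u hu0 => ?_
      rw [hmem] at hp
      rw [Projectivization.map_mk, ne_eq, Projectivization.mk_eq_mk_iff']
      rintro ⟨c, hc⟩
      exact hfp u hp c hc)
    (Projectivization.mk ℂ v hv0) ((hmem _ _).2 hv)
  simp only [Projectivization.map_mk] at h
  have h' := h.symm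
  rw [Projectivization.mk_eq_mk_iff'] at h'
  obtain ⟨c, hc⟩ := h'
  have hc0 : c ≠ 0 := by
    rintro rfl; apply hv0; rw [← hc, zero_smul]
  exact ⟨c⁻¹, by rw [inv_smul_eq_iff₀ hc0]; exact hc.symm⟩

lemma no_fixed {R : Fin 4 → Submodule ℂ (Fin 4 → ℂ)} {Z : Fin 4 → Set (ℙ ℂ (Fin 4 → ℂ))}
    (hyp : HalfGridHyp R Z)
    (hcol : ∀ T : Set (ℙ ℂ (Fin 4 → ℂ)), T ⊆ (⋃ x, Z x) → T.ncard = 4 →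
      (∃ U : Submodule ℂ (Fin 4 → ℂ), Module.finrank ℂ U = 2 ∧
        ∀ p ∈ T, Projectivization.submodule p ≤ U) →
      ∃ x, T = Z x) (p q : Fin 4 → ℂ) (c : ℂ) (h0 : IsPt (Z 0) p) (h1 : IsPt (Z 1) q)
      (h2 : IsPt (Z 2) (p + q)) (h3 : IsPt (Z 3) (p + c • q)) : False := by
  let w : Fin 4 → (Fin 4 → ℂ) := ![p, q, p + q, p + c • q]
  have hw : ∀ x, IsPt (Z x) (w x) := by
    intro x; fin_cases x
    · exact h0
    · exact h1
    · exact h2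
    · exact h3
  choose hw0 hwZ using hw
  let P : Fin 4 → ℙ ℂ (Fin 4 → ℂ) := fun x => Projectivization.mk ℂ (w x) (hw0 x)
  have hR : ∀ x, w x ∈ R x := fun x => IsPt.mem hyp ⟨hw0 x, hwZ x⟩
  have hP : Function.Injective P := by
    intro x y hxy
    by_contra hne
    obtain ⟨d, hd⟩ := (Projectivization.mk_eq_mk_iff' _ _ _ _ _).1 hxy
    exact hw0 x (skew_zero_s7 hyp hne (hR x) (hd ▸ (R y).smul_mem d (hR y)))
  have hli : LinearIndependent ℂ ![p, q] := by
    rw [LinearIndependent.pair_iff' (show p ≠ 0 from hw0 0)]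
    intro d hd
    exact hw0 1 (skew_zero_s7 hyp (x := 0) (y := 1) (by decide)
      (by change q ∈ R 0; rw [← hd]; exact (R 0).smul_mem d (hR 0)) (hR 1))
  obtain ⟨x, hx⟩ := hcol (Set.range P) (by
      rintro _ ⟨y, rfl⟩
      exact Set.mem_iUnion.2 ⟨y, hwZ y⟩)
    (by rw [← Set.image_univ, Set.ncard_image_of_injective _ hP, Set.ncard_univ]; simp)
    ⟨Submodule.span ℂ (Set.range ![p, q]), by rw [finrank_span_eq_card hli]; simp, by
      have hp : p ∈ Submodule.span ℂ (Set.range ![p, q]) := Submodule.subset_span ⟨0, rfl⟩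
      have hq : q ∈ Submodule.span ℂ (Set.range ![p, q]) := Submodule.subset_span ⟨1, rfl⟩
      rintro _ ⟨y, rfl⟩
      rw [mk_sub_le]
      fin_cases y
      · exact hp
      · exact hq
      · exact Submodule.add_mem _ hp hq
      · exact Submodule.add_mem _ hp (Submodule.smul_mem _ _ hq)⟩
  have hall : ∀ y, w y ∈ R x := by
    intro y
    have : P y ∈ Z x := by rw [← hx]; exact ⟨y, rfl⟩
    exact mk_sub_le.1 (hyp.mem_line _ _ this)
  by_cases hx0 : x = 0
  · subst hx0
    exact hw0 1 (skew_zero_s7 hyp (x := 0) (y := 1) (by decide) (hall 1) (hR 1))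
  · exact hw0 0 (skew_zero_s7 hyp hx0 (hall 0) (hR 0))

lemma algebra_cases (M : V2 →ₗ[ℂ] V2) (v : V2) (hv0 : v ≠ 0) (hli : ∀ c : ℂ, c • v ≠ M v)
    (c e : ℂ) (hc : c • v = M (M (M (M v))))
    (he : e • v = (1 - M : V2 →ₗ[ℂ] V2) ((1 - M : V2 →ₗ[ℂ] V2) ((1 - M : V2 →ₗ[ℂ] V2)
      ((1 - M : V2 →ₗ[ℂ] V2) v)))) :
    (∀ w, M (M w) = -w) ∨ (∀ w, M (M w) = (2 : ℂ) • M w - (2 : ℂ) • w) ∨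
    (∀ w, M (M w) = M w - (1 / 2 : ℂ) • w) := by
  have hLI : LinearIndependent ℂ ![v, M v] := (LinearIndependent.pair_iff' hv0).2 hli
  have hpair := LinearIndependent.pair_iff.1 hLI
  have hspan : ∀ u : V2, ∃ s t : ℂ, s • v + t • M v = u := fun u =>
    span_pair_of_finrank (L := ⊤) (by simp) trivial trivial trivial hLI
  obtain ⟨d, t, hM2⟩ := hspan (M (M v))
  have hM : ∀ w, M (M w) = t • M w + d • w := by
    intro w
    obtain ⟨x, y, rfl⟩ := hspan w
    simp only [map_add, map_smul, ← hM2]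
    module
  have e1 : t * (t ^ 2 + 2 * d) = 0 := by
    refine (hpair (t ^ 2 * d + d ^ 2 - c) (t * (t ^ 2 + 2 * d)) ?_).2
    simp only [hM, map_add, map_smul] at hc
    have hc' := sub_eq_zero.2 hc.symm
    rw [← hc']
    module
  have e2 : (2 - t) * ((2 - t) ^ 2 - 2 * (1 - t - d)) = 0 := by
    simp only [LinearMap.sub_apply, Module.End.one_apply, map_sub, hM, map_add, map_smul] at he
    have he' := sub_eq_zero.2 he.symm
    have : ∃ z : ℂ, z • v + (-((2 - t) * ((2 - t) ^ 2 - 2 * (1 - t - d)))) • M v = 0 := by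
      refine ⟨1 + 6 * d - 4 * (t * d) + t ^ 2 * d + d ^ 2 - e, ?_⟩
      rw [← he']
      module
    obtain ⟨z, hz⟩ := this
    exact neg_eq_zero.1 (hpair _ _ hz).2
  rcases mul_eq_zero.1 e1 with ht | ht
  · subst ht
    left
    have hd : d = -1 := by
      have : (2 : ℂ) * (2 + 2 * d) = 0 := by linear_combination e2
      linear_combination this / 4
    intro w; rw [hM, hd]; module
  · right
    rcases mul_eq_zero.1 e2 with ht2 | ht2
    · left
      have h1 : t = 2 := by linear_combination -ht2
      have h2 : d = -2 := by rw [h1] at ht; linear_combination ht / 2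
      intro w; rw [hM, h1, h2]; module
    · right
      have h1 : t = 1 := by linear_combination (ht - ht2) / 2
      have h2 : d = -(1/2) := by rw [h1] at ht; linear_combination ht / 2
      intro w; rw [hM, h1, h2]; module

/-- Let `Z = Z 0 ∪ Z 1 ∪ Z 2 ∪ Z 3` satisfy the half-grid hypotheses and
assume in addition that the only 4-element collinear subsets of `Z` are the quadruples
`Z 0, …, Z 3` (so exactly 4 lines contain 4 of the configuration points).  Then `Z` is
projectively equivalent to configuration B: some linear automorphism of `ℂ⁴` induces a
projective transformation of `ℙ³` mapping configuration B onto `Z`. -/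
theorem harmonic_case_classification
    (R : Fin 4 → Submodule ℂ (Fin 4 → ℂ)) (Z : Fin 4 → Set (ℙ ℂ (Fin 4 → ℂ)))
    (hyp : HalfGridHyp R Z)
    (hcol : ∀ T : Set (ℙ ℂ (Fin 4 → ℂ)), T ⊆ (⋃ x, Z x) → T.ncard = 4 →
      (∃ U : Submodule ℂ (Fin 4 → ℂ), Module.finrank ℂ U = 2 ∧
        ∀ p ∈ T, Projectivization.submodule p ≤ U) →
      ∃ x, T = Z x) :
    ∃ F : (Fin 4 → ℂ) ≃ₗ[ℂ] (Fin 4 → ℂ),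
      Projectivization.map F.toLinearMap F.injective '' configB = ⋃ x, Z x := by
  obtain ⟨ea, eb, hab⟩ := exists_maps (hyp.finrank_eq 0) (hyp.finrank_eq 1) (hyp.finrank_eq 2)
    (hyp.skew 0 1 (by decide)) (hyp.skew 0 2 (by decide)) (hyp.skew 1 2 (by decide))
  obtain ⟨ea', eb', hab'⟩ := exists_maps (hyp.finrank_eq 0) (hyp.finrank_eq 1) (hyp.finrank_eq 3)
    (hyp.skew 0 1 (by decide)) (hyp.skew 0 3 (by decide)) (hyp.skew 1 3 (by decide))
  let a : V2 →ₗ[ℂ] (Fin 4 → ℂ) := (R 0).subtype.comp ea.toLinearMap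
  let b : V2 →ₗ[ℂ] (Fin 4 → ℂ) := (R 1).subtype.comp eb.toLinearMap
  let M : V2 →ₗ[ℂ] V2 := (ea.trans (ea'.symm.trans (eb'.trans eb.symm))).toLinearMap
  have ha : Function.Injective a := fun x y h => ea.injective (Subtype.ext h)
  have hb : Function.Injective b := fun x y h => eb.injective (Subtype.ext h)
  have hMi : Function.Injective M := LinearEquiv.injective _
  have ha0 : ∀ v, a v ∈ R 0 := fun v => (ea v).2
  have hb1 : ∀ v, b v ∈ R 1 := fun v => (eb v).2
  have hc2 : ∀ v, a v + b v ∈ R 2 := hab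
  have hd3 : ∀ v, a v + b (M v) ∈ R 3 := by
    intro v
    have := hab' (ea'.symm (ea v))
    simpa [a, b, M] using this
  clear_value a b M
  have hN : ∀ w, (1 - M : V2 →ₗ[ℂ] V2) w = w - M w := fun w => rfl
  have hNi : Function.Injective (1 - M : V2 →ₗ[ℂ] V2) := by
    rw [injective_iff_map_eq_zero]
    intro w hw
    have h1 : M w = w := by rw [hN] at hw; exact (sub_eq_zero.1 hw).symm
    have h2 := hd3 w
    rw [h1] at h2
    have h3 := skew_zero_s7 hyp (x := 2) (y := 3) (by decide) (hc2 w) h2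
    have h4 := eq_neg_of_add_eq_zero_left h3
    have h5 := skew_zero_s7 hyp (x := 0) (y := 1) (by decide) (ha0 w)
      (h4 ▸ (R 1).neg_mem (hb1 w))
    exact ha (by simpa using h5)
  have habi : Function.Injective (a + b) := by
    rw [injective_iff_map_eq_zero]
    intro w hw
    have h4 := eq_neg_of_add_eq_zero_left hw
    have h5 := skew_zero_s7 hyp (x := 0) (y := 1) (by decide) (ha0 w)
      (h4 ▸ (R 1).neg_mem (hb1 w))
    exact ha (by simpa using h5)
  have hdi : Function.Injective (a + b.comp M) := by
    rw [injective_iff_map_eq_zero]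
    intro w hw
    have h4 := eq_neg_of_add_eq_zero_left hw
    have h5 := skew_zero_s7 hyp (x := 0) (y := 1) (by decide) (ha0 w)
      (h4 ▸ (R 1).neg_mem (hb1 _))
    exact ha (by simpa using h5)
  -- the grid relations
  have g012 : ∀ v, IsPt (Z 0) (a v) → IsPt (Z 1) (b v) ∧ IsPt (Z 2) (a v + b v) :=
    grid_step hyp 0 1 2 3 (by decide) (by decide) (by decide) (by decide) (by decide) (by decide)
      a b ha hb ha0 hb1 hc2
  have g102 : ∀ v, IsPt (Z 1) (b v) → IsPt (Z 0) (a v) ∧ IsPt (Z 2) (b v + a v) :=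
    grid_step hyp 1 0 2 3 (by decide) (by decide) (by decide) (by decide) (by decide) (by decide)
      b a hb ha hb1 ha0 (fun v => by rw [add_comm]; exact hc2 v)
  have g013 : ∀ v, IsPt (Z 0) (a v) → IsPt (Z 1) (b (M v)) ∧ IsPt (Z 3) (a v + b (M v)) :=
    grid_step hyp 0 1 3 2 (by decide) (by decide) (by decide) (by decide) (by decide) (by decide)
      a (b.comp M) ha (hb.comp hMi) ha0 (fun v => hb1 _) hd3
  have g320 : ∀ v, IsPt (Z 3) (a v + b (M v)) → IsPt (Z 0) (a v - a (M v)) := by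
    intro v hv
    have hid : ∀ v, (a + b.comp M) v + (-((a + b).comp M)) v = a v - a (M v) := by
      intro v
      simp only [LinearMap.add_apply, LinearMap.neg_apply, LinearMap.comp_apply]
      abel
    have := (grid_step hyp 3 2 0 1 (by decide) (by decide) (by decide) (by decide) (by decide)
      (by decide) (a + b.comp M) (-((a + b).comp M)) hdi
      (neg_injective.comp (habi.comp hMi)) hd3
      (fun v => (R 2).neg_mem (hc2 (M v)))
      (fun v => by rw [hid]; exact (R 0).sub_mem (ha0 _) (ha0 _)) v hv).2
    rwa [hid] at this
  have hAM : ∀ v, IsPt (Z 0) (a v) → IsPt (Z 0) (a (M v)) := fun v hv =>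
    (g102 _ (g013 v hv).1).1
  have hAN : ∀ v, IsPt (Z 0) (a v) → IsPt (Z 0) (a (v - M v)) := fun v hv => by
    rw [map_sub]; exact g320 v (g013 v hv).2
  have hAs : ∀ (c : ℂ) v, c ≠ 0 → IsPt (Z 0) (a v) → IsPt (Z 0) (a (c • v)) := fun c v hc hv => by
    rw [map_smul]; exact hv.smul hc
  have hfp : ∀ v, IsPt (Z 0) (a v) → ∀ c : ℂ, c • v ≠ M v := by
    intro v hv c hc
    have h3 := (g013 v hv).2
    rw [← hc, map_smul] at h3
    exact no_fixed hyp hcol (a v) (b v) c hv (g012 v hv).1 (g012 v hv).2 h3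
  have hfpN : ∀ v, IsPt (Z 0) (a v) → ∀ c : ℂ, c • v ≠ (1 - M : V2 →ₗ[ℂ] V2) v := by
    intro v hv c hc
    rw [hN] at hc
    refine hfp v hv (1 - c) ?_
    rw [sub_smul, one_smul, hc]; abel
  have hr : ∀ w, IsPt (Z 0) w → ∃ v, a v = w := fun w hw =>
    surj_of_inj ha (hyp.finrank_eq 0) ha0 (hw.mem hyp)
  obtain ⟨v, hv⟩ : ∃ v, IsPt (Z 0) (a v) := by
    obtain ⟨p, hp⟩ := Set.nonempty_of_ncard_ne_zero (s := Z 0) (by rw [hyp.ncard_eq]; omega)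
    induction p using Projectivization.ind with | h w hw0 => ?_
    obtain ⟨v, rfl⟩ := hr w ⟨hw0, hp⟩
    exact ⟨v, hw0, hp⟩
  have hv0 : v ≠ 0 := by
    rintro rfl
    obtain ⟨h, -⟩ := hv
    simp at h
  obtain ⟨c, hc⟩ := iter_pt (hyp.ncard_eq 0) a ha hr M hMi hAM hfp v hv
  obtain ⟨e, he⟩ := iter_pt (hyp.ncard_eq 0) a ha hr (1 - M) hNi hAN hfpN v hv
  have hneg1 : (-1 : ℂ) ≠ 0 := by norm_num
  rcases algebra_cases M v hv0 (hfp v hv) c e hc he with hM | hM | hM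
  · refine finish2 hyp ![0, 1, 2, 3] (by decide) (by decide) a b M ha hb ha0 hb1
      (fun u => IsPt (Z 0) (a u)) (fun u hu => hu) (fun u hu => (g012 u hu).1)
      (fun u hu => (g012 u hu).2) (fun u hu => (g013 u hu).2) v (hM v) (hfp v hv) hv0 hv
      ?_ (hAN v hv) ?_
    · have := hAs (-1) _ hneg1 (hAM v hv)
      rwa [neg_one_smul] at this
    · have := hAN _ (hAM v hv)
      rwa [hM, sub_neg_eq_add, add_comm] at this
  · refine finish2 hyp ![2, 1, 0, 3] (by decide) (by decide) (a + b) (-b) (1 - M) habi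
      (neg_injective.comp hb) hc2 (fun u => (R 1).neg_mem (hb1 u))
      (fun u => IsPt (Z 0) (a u)) (fun u hu => (g012 u hu).2) (fun u hu => ?_)
      (fun u hu => ?_) (fun u hu => ?_) v ?_ (hfpN v hv) hv0 hv ?_ ?_ ?_
    · have := (g012 u hu).1.smul hneg1
      rwa [neg_one_smul] at this
    · change IsPt (Z 0) _
      convert hu using 1
      simp
    · change IsPt (Z 3) _
      convert (g013 u hu).2 using 1
      simp
    · simp only [hN, map_sub, hM]; module
    · have := hAs (-1) _ hneg1 (hAN v hv)
      rwa [neg_one_smul] at this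
    · have := hAM v hv
      rw [hN]; simpa using this
    · have := hAN _ (hAM v hv)
      rw [hM] at this
      rw [hN]
      convert this using 2
      module
  · let K : V2 →ₗ[ℂ] V2 := 1 - (2 : ℂ) • M
    have hK : ∀ w, K w = w - (2 : ℂ) • M w := fun w => rfl
    clear_value K
    have h2 : (2 : ℂ) ≠ 0 := by norm_num
    refine finish2 hyp ![0, 2, 1, 3] (by decide) (by decide) a (-(a + b)) K ha
      (neg_injective.comp habi) ha0 (fun u => (R 2).neg_mem (hc2 u))
      (fun u => IsPt (Z 0) (a u)) (fun u hu => hu) (fun u hu => ?_)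
      (fun u hu => ?_) (fun u hu => ?_) v ?_ ?_ hv0 hv ?_ ?_ ?_
    · have := (g012 u hu).2.smul hneg1
      rwa [neg_one_smul] at this
    · change IsPt (Z 1) _
      convert (g012 u hu).1.smul hneg1 using 1
      simp
    · change IsPt (Z 3) _
      convert (g013 _ (hAs 2 _ h2 (hAM u hu))).2 using 1
      simp only [hK, LinearMap.neg_apply, LinearMap.add_apply, map_sub, map_smul, hM]
      module
    · simp only [hK, map_sub, map_smul, hM]; module
    · intro c hc
      rw [hK] at hc
      refine hfp v hv ((1 - c) / 2) ?_
      have h5 : (2 : ℂ) • M v = (1 - c) • v := by rw [sub_smul, one_smul, hc]; abel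
      rw [div_eq_inv_mul, mul_smul, ← h5, smul_smul]; norm_num
    · have := hAs 2 _ h2 (hAM _ (hAM v hv))
      rw [hM] at this
      rw [hK]
      convert this using 2
      module
    · have := hAs 2 _ h2 (hAM v hv)
      rw [hK]
      convert this using 2
      module
    · have := hAs 2 _ h2 (hAN v hv)
      rw [hK]
      convert this using 2
      module
end
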